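/- arXiv:2005.03619 — 9 statements merged into one kernel-verified Lean document; each statement's English description precedes it below -/
import Mathlib

section
/- For every positive integer n, the total number of parts (counted with multiplicity) in all partitions of n into odd parts is greater than or equal to the total number of parts in all partitions of n into distinct parts. -/
/-!
Glaisher's map sends a partition into distinct parts to a partition into odd parts by splitting
every part `2 ^ k * m`, with `m` odd, into `2 ^ k` copies of `m`. Splitting never decreases the
number of parts. The map is injective on partitions into distinct parts: the multiplicity of an
odd `m` in the image is the sum of `2 ^ k` over the parts `2 ^ k * m`, and uniqueness of binary
expansions recovers the set of these `k` (`count_bind_splitPart`, `glaisherSplit_injOn`).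
Comparing the two totals along this injection gives the inequality; surjectivity, and hence
Euler's theorem, is not needed.
-/

open Nat Finset

/-- Total number of parts (with multiplicity) in all partitions of `n` into odd parts. -/
def oddPartsTotal (n : ℕ) : ℕ :=
  ∑ p ∈ Nat.Partition.odds n, Multiset.card p.parts

/-- Total number of parts (with multiplicity) in all partitions of `n` into distinct parts. -/
def distinctPartsTotal (n : ℕ) : ℕ :=
  ∑ p ∈ Nat.Partition.distincts n, Multiset.card p.parts

/-- `b n` : number of parts in odd partitions of `n` minus number of parts in distinct
partitions of `n`; zero for negative arguments. -/
def b (n : ℤ) : ℤ :=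
  if 0 ≤ n then (oddPartsTotal n.toNat : ℤ) - (distinctPartsTotal n.toNat : ℤ) else 0

/-- `s n` : number of parts in partitions of `n` into an odd number of distinct parts minus
the number of parts in partitions of `n` into an even number of distinct parts. -/
def s (n : ℕ) : ℤ :=
  ∑ p ∈ Nat.Partition.distincts n,
    (if Odd (Multiset.card p.parts) then (Multiset.card p.parts : ℤ)
     else -(Multiset.card p.parts : ℤ))

/-- Total number of parts in all partitions of `n`. -/
def SN (n : ℕ) : ℕ := ∑ p : Nat.Partition n, Multiset.card p.parts

/-- `S` extended to the integers: `0` unless the argument is a positive integer. -/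
def S (n : ℤ) : ℤ := if 0 < n then (SN n.toNat : ℤ) else 0

/-- The partition function `p(n)`. -/
def pN (n : ℕ) : ℕ := Fintype.card (Nat.Partition n)

/-- The partition function extended by `0` on negative integers. -/
def pZ (n : ℤ) : ℤ := if 0 ≤ n then (pN n.toNat : ℤ) else 0

/-- Number of partitions of `n` into distinct parts. -/
def Qd (n : ℕ) : ℕ := (Nat.Partition.distincts n).card

/-- `M k n` : number of partitions of `n` in which `k` is the least positive integer that is
not a part and there are more parts greater than `k` than parts smaller than `k`. -/
def M (k n : ℕ) : ℕ :=
  Finset.card (Finset.univ.filter (fun p : Nat.Partition n =>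
    k ∉ p.parts ∧ (∀ j < k, 0 < j → j ∈ p.parts) ∧
      Multiset.card (p.parts.filter (fun x => x < k)) <
        Multiset.card (p.parts.filter (fun x => k < x))))

/-- `MP k n` : number of partitions of `n` whose largest part is greater than `2k-1`, is odd
and appears exactly `k` times, while every other odd part appears at most once. -/
def MP (k n : ℕ) : ℕ :=
  Finset.card (Finset.univ.filter (fun p : Nat.Partition n =>
    2 * k - 1 < p.parts.sup ∧ Odd p.parts.sup ∧ p.parts.count p.parts.sup = k ∧
      ∀ x ∈ p.parts, x ≠ p.parts.sup → Odd x → p.parts.count x ≤ 1))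

/-- `e n` : number of partitions of `n` in which every even part occurs an even number of
times (OEIS A006950). -/
def e (n : ℕ) : ℕ :=
  Finset.card (Finset.univ.filter (fun p : Nat.Partition n =>
    ∀ x ∈ p.parts, Even x → Even (p.parts.count x)))

/-- The multiset of `2 ^ k` copies of the odd number `m`, where `x = 2 ^ k * m`. -/
def splitPart (x : ℕ) : Multiset ℕ :=
  Multiset.replicate (2 ^ x.factorization 2) (x / 2 ^ x.factorization 2)

lemma splitPart_sum (x : ℕ) : (splitPart x).sum = x := by
  simp [splitPart, Nat.ordProj_mul_ordCompl_eq_self]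

/-- Glaisher's map: every part is split into equal odd parts, a power of two of them. -/
def glaisherSplit {n : ℕ} (p : Nat.Partition n) : Nat.Partition n where
  parts := p.parts.bind splitPart
  parts_pos := by
    intro i hi
    obtain ⟨x, hx, hix⟩ := Multiset.mem_bind.1 hi
    rw [Multiset.eq_of_mem_replicate hix]
    exact Nat.ordCompl_pos 2 (p.parts_pos hx).ne'
  parts_sum := by
    rw [Multiset.sum_bind]
    simp [splitPart_sum, p.parts_sum]

lemma glaisherSplit_mem_odds {n : ℕ} (p : Nat.Partition n) :
    glaisherSplit p ∈ Nat.Partition.odds n := by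
  simp only [Nat.Partition.odds, Nat.Partition.restricted, Finset.mem_filter, Finset.mem_univ,
    true_and]
  intro i hi
  obtain ⟨x, hx, hix⟩ := Multiset.mem_bind.1 hi
  rw [Multiset.eq_of_mem_replicate hix, even_iff_two_dvd]
  exact Nat.not_dvd_ordCompl Nat.prime_two (p.parts_pos hx).ne'

lemma card_le_card_glaisherSplit {n : ℕ} (p : Nat.Partition n) :
    Multiset.card p.parts ≤ Multiset.card (glaisherSplit p).parts := by
  have h : ∀ s : Multiset ℕ, Multiset.card s ≤ Multiset.card (s.bind splitPart) := by
    intro s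
    induction s using Multiset.induction_on with
    | empty => simp
    | cons a s ih =>
      have := Nat.one_le_two_pow (n := a.factorization 2)
      simp only [Multiset.card_cons, Multiset.cons_bind, Multiset.card_add, splitPart,
        Multiset.card_replicate] at *
      omega
  exact h p.parts

/-- The exponents `k` such that `2 ^ k * m` lies in `s` (for odd `m` and `0 ∉ s`). -/
def exponents (s : Finset ℕ) (m : ℕ) : Finset ℕ :=
  (s.filter fun x => x / 2 ^ x.factorization 2 = m).image fun x => x.factorization 2

/-- The exponents are the binary digits of the multiplicity of `m` after splitting. -/
lemma count_bind_splitPart (s : Finset ℕ) (m : ℕ) :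
    (s.val.bind splitPart).count m = ∑ k ∈ exponents s m, 2 ^ k := by
  rw [exponents, Finset.sum_image, Finset.sum_filter, Multiset.count_bind]
  · simp only [splitPart, Multiset.count_replicate]
    rfl
  · intro x hx y hy hxy
    have hx' := (Finset.mem_filter.1 hx).2
    have hy' := (Finset.mem_filter.1 hy).2
    simp only at hxy
    rw [← Nat.ordProj_mul_ordCompl_eq_self x 2, ← Nat.ordProj_mul_ordCompl_eq_self y 2, hx', hy',
      hxy]

lemma mem_iff_mem_exponents (s : Finset ℕ) (x : ℕ) :
    x ∈ s ↔ x.factorization 2 ∈ exponents s (x / 2 ^ x.factorization 2) := by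
  simp only [exponents, Finset.mem_image, Finset.mem_filter]
  refine ⟨fun h => ⟨x, ⟨h, rfl⟩, rfl⟩, ?_⟩
  rintro ⟨y, ⟨hy, h1⟩, h2⟩
  have : y = x := by
    rw [← Nat.ordProj_mul_ordCompl_eq_self y 2, h1, h2, Nat.ordProj_mul_ordCompl_eq_self]
  exact this ▸ hy

lemma glaisherSplit_injOn (n : ℕ) :
    Set.InjOn (glaisherSplit (n := n)) (Nat.Partition.distincts n) := by
  intro p hp q hq h
  have hp' : p.parts.Nodup := by simpa [Nat.Partition.distincts] using hp
  have hq' : q.parts.Nodup := by simpa [Nat.Partition.distincts] using hq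
  have hparts : p.parts.bind splitPart = q.parts.bind splitPart :=
    congrArg Nat.Partition.parts h
  have hexp : ∀ m, exponents ⟨p.parts, hp'⟩ m = exponents ⟨q.parts, hq'⟩ m := by
    intro m
    -- uniqueness of binary expansions
    apply Finset.geomSum_injective le_rfl
    simp only
    rw [← count_bind_splitPart, ← count_bind_splitPart, hparts]
  have hs : (⟨p.parts, hp'⟩ : Finset ℕ) = ⟨q.parts, hq'⟩ := by
    ext x
    rw [mem_iff_mem_exponents, hexp, ← mem_iff_mem_exponents]
  exact Nat.Partition.ext (congrArg Finset.val hs)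

/-- The total number of parts in all partitions of `n` into odd parts is at least the total
number of parts in all partitions of `n` into distinct parts. -/
theorem statement0 (n : ℕ) (hn : 0 < n) :
    distinctPartsTotal n ≤ oddPartsTotal n := by
  calc distinctPartsTotal n
      ≤ ∑ p ∈ Nat.Partition.distincts n, Multiset.card (glaisherSplit p).parts :=
        Finset.sum_le_sum fun p _ => card_le_card_glaisherSplit p
    _ = ∑ q ∈ (Nat.Partition.distincts n).image glaisherSplit, Multiset.card q.parts :=
        (Finset.sum_image (f := fun q : Nat.Partition n => Multiset.card q.parts)
          (glaisherSplit_injOn n)).symm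
    _ ≤ oddPartsTotal n :=
        Finset.sum_le_sum_of_subset
          (Finset.image_subset_iff.2 fun p _ => glaisherSplit_mem_odds p)
end

section
/- For every positive integer n, the number of partitions of n in which the set of even parts has exactly one element equals b(n), the difference between the total number of parts in all partitions of n into odd parts and the total number of parts in all partitions of n into distinct parts. -/
/-! All three quantities are expanded in the number `Q(N)` of partitions of `N` into odd parts,
which by Euler's theorem is also the number of partitions of `N` into distinct parts. Removing `k`
copies of a part `m` (`card_remove`) gives, with sums over pairs `m, k ≥ 1` such that `m * k ≤ n`:

* the number of parts in odd partitions of `n` is `∑ Q(n - m * k)` over odd `m`: each part size `m`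
  is counted once for every `k` not exceeding its multiplicity;
* the number of partitions with exactly one even part size is `∑ Q(n - m * k)` over even `m`: here
  `m` is the even part and `k` its multiplicity;
* the number of distinct partitions containing `m` is `∑ₖ (-1)^(k-1) Q(n - m * k)`, by iterating
  the fact that deleting `m` leaves a distinct partition of `n - m` that avoids `m`.

So the number of parts in distinct partitions is the sum over odd `k` minus the sum over even `k`.
Exchanging `m` and `k`, this is the odd-`m` sum minus the even-`m` sum. -/

open Nat Finset

/-- Removing `k` copies of `m` is a bijection from the partitions of `n` containing `k` copies
of `m` onto the partitions of `n - m * k`; the predicate `R` restricts what remains. -/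
lemma card_remove (R : Multiset ℕ → Prop) [DecidablePred R] {n m k : ℕ} (hm : 0 < m)
    (h : m * k ≤ n) :
    #{p : n.Partition | Multiset.replicate k m ≤ p.parts ∧
        R (p.parts - Multiset.replicate k m)} =
      #{p : (n - m * k).Partition | R p.parts} := by
  symm
  refine Finset.card_bij'
    (fun p _ => ⟨p.parts + Multiset.replicate k m, ?_, ?_⟩)
    (fun p hp => ⟨p.parts - Multiset.replicate k m, ?_, ?_⟩) ?_ ?_ ?_ ?_
  · intro i hi
    rcases Multiset.mem_add.1 hi with hi | hi
    · exact p.parts_pos hi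
    · rw [Multiset.eq_of_mem_replicate hi]; exact hm
  · rw [Multiset.sum_add, p.parts_sum, Multiset.sum_replicate, smul_eq_mul, mul_comm k]
    omega
  · intro i hi
    exact p.parts_pos (Multiset.mem_of_le (Multiset.sub_le_self _ _) hi)
  · have h1 := (mem_filter.1 hp).2.1
    have h2 : (p.parts - Multiset.replicate k m).sum + (Multiset.replicate k m).sum = n := by
      rw [← Multiset.sum_add, Multiset.sub_add_cancel h1, p.parts_sum]
    rw [Multiset.sum_replicate, smul_eq_mul, mul_comm k] at h2
    omega
  · intro p hp
    simpa using hp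
  · intro p hp
    simpa using (mem_filter.1 hp).2.2
  · intro p hp
    ext1
    simp
  · intro p hp
    ext1
    exact Multiset.sub_add_cancel (mem_filter.1 hp).2.1

lemma mul_count_le {n : ℕ} (p : n.Partition) (m : ℕ) : m * p.parts.count m ≤ n := by
  obtain ⟨u, hu⟩ := Multiset.le_iff_exists_add.1
    (Multiset.le_count_iff_replicate_le.1 (le_refl (p.parts.count m)))
  have h := congrArg Multiset.sum hu
  rw [Multiset.sum_add, Multiset.sum_replicate, smul_eq_mul, mul_comm, p.parts_sum] at h
  omega

lemma mem_Icc_of_mem {n m : ℕ} (p : n.Partition) (h : m ∈ p.parts) : m ∈ Icc 1 n :=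
  mem_Icc.2 ⟨p.parts_pos h, p.le_of_mem_parts h⟩

lemma card_parts_eq_sum {n : ℕ} (p : n.Partition) :
    Multiset.card p.parts = ∑ m ∈ Icc 1 n, p.parts.count m :=
  (Multiset.sum_count_eq_card fun _ h => mem_Icc_of_mem p h).symm

lemma count_eq_sum {n m : ℕ} (hm : 0 < m) (p : n.Partition) :
    p.parts.count m = ∑ k ∈ Icc 1 n, if k ≤ p.parts.count m then 1 else 0 := by
  rw [← Finset.card_filter]
  have : {k ∈ Icc 1 n | k ≤ p.parts.count m} = Icc 1 (p.parts.count m) := by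
    ext k
    have := mul_count_le p m
    have := Nat.le_mul_of_pos_left (p.parts.count m) hm
    simp only [mem_filter, mem_Icc]
    omega
  rw [this]
  simp

/-- Odd partitions of `n` with at least `k ≥ 1` copies of `m`. -/
lemma card_odds_count {n m k : ℕ} (hm : 0 < m) (hk : 0 < k) :
    #{p ∈ Nat.Partition.odds n | k ≤ p.parts.count m} =
      if m * k ≤ n ∧ ¬ Even m then #(Nat.Partition.odds (n - m * k)) else 0 := by
  split_ifs with h
  · unfold Nat.Partition.odds Nat.Partition.restricted
    rw [← card_remove (fun s => ∀ i ∈ s, ¬ Even i) hm h.1]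
    congr 1
    ext p
    simp only [mem_filter, mem_univ, true_and, Multiset.le_count_iff_replicate_le]
    constructor
    · rintro ⟨h1, h2⟩
      exact ⟨h2, fun i hi => h1 i (Multiset.mem_of_le (Multiset.sub_le_self _ _) hi)⟩
    · rintro ⟨h1, h2⟩
      refine ⟨fun i hi => ?_, h1⟩
      rw [← Multiset.sub_add_cancel h1] at hi
      rcases Multiset.mem_add.1 hi with hi | hi
      · exact h2 i hi
      · rw [Multiset.eq_of_mem_replicate hi]; exact h.2
  · rw [Finset.card_eq_zero, Finset.filter_eq_empty_iff]
    intro p hp hc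
    refine h ⟨(Nat.mul_le_mul_left m hc).trans (mul_count_le p m), ?_⟩
    exact (mem_filter.1 hp).2 m (Multiset.count_pos.1 (by omega))

lemma oddPartsTotal_eq (n : ℕ) :
    oddPartsTotal n = ∑ m ∈ Icc 1 n, ∑ k ∈ Icc 1 n,
      if m * k ≤ n ∧ ¬ Even m then #(Nat.Partition.odds (n - m * k)) else 0 := by
  unfold oddPartsTotal
  simp_rw [card_parts_eq_sum]
  rw [Finset.sum_comm]
  refine Finset.sum_congr rfl fun m hm => ?_
  have hm := (mem_Icc.1 hm).1
  rw [Finset.sum_congr rfl fun p _ => count_eq_sum hm p, Finset.sum_comm]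
  refine Finset.sum_congr rfl fun k hk => ?_
  rw [← Finset.card_filter, card_odds_count hm (mem_Icc.1 hk).1]

/-- Partitions of `n` whose only even part is `m`, occurring exactly `k ≥ 1` times. -/
lemma card_even_count {n m k : ℕ} (hm : 0 < m) (hk : 0 < k) :
    #{p : n.Partition | p.parts.toFinset.filter (fun x => Even x) = {m} ∧
        p.parts.count m = k} =
      if m * k ≤ n ∧ Even m then #(Nat.Partition.odds (n - m * k)) else 0 := by
  split_ifs with h
  · unfold Nat.Partition.odds Nat.Partition.restricted
    rw [← card_remove (fun s => ∀ i ∈ s, ¬ Even i) hm h.1]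
    congr 1
    ext p
    simp only [mem_filter, mem_univ, true_and]
    constructor
    · rintro ⟨h1, h2⟩
      refine ⟨Multiset.le_count_iff_replicate_le.1 h2.ge, fun i hi he => ?_⟩
      have hi' : i ∈ p.parts := Multiset.mem_of_le (Multiset.sub_le_self _ _) hi
      have : i ∈ p.parts.toFinset.filter (fun x => Even x) := by simp [hi', he]
      rw [h1, mem_singleton] at this
      subst this
      have := Multiset.count_pos.2 hi
      simp [Multiset.count_sub, h2] at this
    · rintro ⟨h1, h2⟩
      have hc : p.parts.count m = k := by
        have h3 : (p.parts - Multiset.replicate k m).count m = 0 :=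
          Multiset.count_eq_zero.2 fun hi => h2 m hi h.2
        have h4 := Multiset.le_count_iff_replicate_le.2 h1
        simp [Multiset.count_sub] at h3
        omega
      refine ⟨?_, hc⟩
      ext i
      simp only [mem_filter, Multiset.mem_toFinset, mem_singleton]
      constructor
      · rintro ⟨hi, he⟩
        rw [← Multiset.sub_add_cancel h1] at hi
        rcases Multiset.mem_add.1 hi with hi | hi
        · exact absurd he (h2 i hi)
        · exact Multiset.eq_of_mem_replicate hi
      · rintro rfl
        exact ⟨Multiset.count_pos.1 (by omega), h.2⟩
  · rw [Finset.card_eq_zero, Finset.filter_eq_empty_iff]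
    rintro p - ⟨h1, rfl⟩
    have : m ∈ p.parts.toFinset.filter (fun x => Even x) := by simp [h1]
    exact h ⟨mul_count_le p m, (mem_filter.1 this).2⟩

lemma card_one_even_eq (n : ℕ) :
    #{p : n.Partition | (p.parts.toFinset.filter (fun x => Even x)).card = 1} =
      ∑ m ∈ Icc 1 n, ∑ k ∈ Icc 1 n,
        if m * k ≤ n ∧ Even m then #(Nat.Partition.odds (n - m * k)) else 0 := by
  rw [Finset.sum_congr rfl fun m hm => Finset.sum_congr rfl fun k hk =>
    (card_even_count (n := n) (mem_Icc.1 hm).1 (mem_Icc.1 hk).1).symm]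
  rw [← Finset.sum_product', ← Finset.card_biUnion]
  · congr 1
    ext p
    simp only [mem_filter, mem_univ, true_and, mem_biUnion, Finset.card_eq_one, mem_product,
      Prod.exists]
    constructor
    · rintro ⟨m, h⟩
      have hm : m ∈ p.parts.toFinset.filter (fun x => Even x) := by simp [h]
      have hm : m ∈ p.parts := by simpa using (mem_filter.1 hm).1
      have h0 := mem_Icc_of_mem p hm
      have h1 := mul_count_le p m
      have h2 := Nat.le_mul_of_pos_left (p.parts.count m) (mem_Icc.1 h0).1
      exact ⟨m, _, ⟨h0, mem_Icc.2 ⟨Multiset.count_pos.2 hm, h2.trans h1⟩⟩, h, rfl⟩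
    · rintro ⟨m, k, -, h, -⟩
      exact ⟨m, h⟩
  · rintro ⟨m, k⟩ - ⟨m', k'⟩ - hne
    refine Finset.disjoint_left.2 fun p hp hp' => hne ?_
    obtain ⟨h1, h2⟩ := (mem_filter.1 hp).2
    obtain ⟨h3, h4⟩ := (mem_filter.1 hp').2
    obtain rfl : m = m' := by simpa using h1.symm.trans h3
    simp only at h2 h4
    rw [← h2, ← h4]

/-- Deleting `m` from a distinct partition of `n` leaves a distinct partition of `n - m` that
avoids `m`. -/
lemma card_distincts_mem_add {n m : ℕ} (hm : 0 < m) (h : m ≤ n) :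
    #{p ∈ Nat.Partition.distincts n | m ∈ p.parts} +
      #{p ∈ Nat.Partition.distincts (n - m) | m ∈ p.parts} =
      #(Nat.Partition.distincts (n - m)) := by
  have key : #{p ∈ Nat.Partition.distincts n | m ∈ p.parts} =
      #{p ∈ Nat.Partition.distincts (n - m) | ¬ m ∈ p.parts} := by
    have := card_remove (fun s => s.Nodup ∧ m ∉ s) (n := n) (k := 1) hm (by simpa using h)
    unfold Nat.Partition.distincts
    rw [Finset.filter_filter, Finset.filter_filter]
    rw [mul_one] at this
    rw [← this]
    congr 1
    ext p
    simp only [mem_filter, mem_univ, true_and, Multiset.replicate_one, Multiset.singleton_le,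
      Multiset.sub_singleton]
    constructor
    · rintro ⟨h1, h2⟩
      exact ⟨h2, h1.erase m, h1.notMem_erase⟩
    · rintro ⟨h1, h2, h3⟩
      refine ⟨?_, h1⟩
      rw [← Multiset.cons_erase h1]
      exact Multiset.nodup_cons.2 ⟨h3, h2⟩
  rw [key, add_comm, Finset.card_filter_add_card_filter_not]

/-- The upper limit `B` is decoupled from `n`, so that the induction can lower both. -/
lemma card_distincts_mem {m : ℕ} (hm : 0 < m) (B n : ℕ) (hB : n ≤ B) :
    (#{p ∈ Nat.Partition.distincts n | m ∈ p.parts} : ℤ) =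
      ∑ k ∈ Icc 1 B, if m * k ≤ n then
        (if Even k then (-1 : ℤ) else 1) * #(Nat.Partition.odds (n - m * k)) else 0 := by
  rw [← Finset.Ico_add_one_right_eq_Icc, Finset.sum_Ico_eq_sum_range, Nat.add_sub_cancel]
  induction B generalizing n with
  | zero =>
    obtain rfl : n = 0 := by omega
    simp
  | succ B ih =>
    rcases lt_or_ge n m with h | h
    · have h1 : {p ∈ Nat.Partition.distincts n | m ∈ p.parts} = ∅ :=
        Finset.filter_eq_empty_iff.2 fun p _ hp => by
          have := p.le_of_mem_parts hp
          omega
      rw [h1, Finset.card_empty, Nat.cast_zero, Finset.sum_eq_zero]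
      intro k _
      have := Nat.le_mul_of_pos_right m (show 0 < 1 + k by omega)
      rw [if_neg (by omega)]
    · have h1 := card_distincts_mem_add hm h
      have h2 := ih (n - m) (by omega)
      rw [← Nat.Partition.card_odds_eq_card_distincts (n - m)] at h1
      rw [Finset.sum_range_succ', add_zero, mul_one, if_pos h, if_neg (by decide), one_mul, ← h1,
        Nat.cast_add, h2, add_left_comm, left_eq_add, ← Finset.sum_add_distrib]
      refine Finset.sum_eq_zero fun k _ => ?_
      have h3 : m * (1 + (k + 1)) = m + m * (1 + k) := by ring
      have h4 : m + m * (1 + k) ≤ n ↔ m * (1 + k) ≤ n - m := by omega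
      have h5 : Even (1 + (k + 1)) ↔ ¬ Even (1 + k) := by
        rw [← add_assoc, Nat.even_add_one]
      have h6 : #(Nat.Partition.odds (n - m * (1 + (k + 1)))) =
          #(Nat.Partition.odds (n - m - m * (1 + k))) :=
        congrArg (fun a => #(Nat.Partition.odds a)) (by omega)
      rw [h6]
      simp only [h3, h4, h5]
      by_cases h7 : m * (1 + k) ≤ n - m <;> by_cases h8 : Even (1 + k) <;> simp [h7, h8]

lemma distinctPartsTotal_eq (n : ℕ) :
    (distinctPartsTotal n : ℤ) = ∑ m ∈ Icc 1 n, ∑ k ∈ Icc 1 n, if m * k ≤ n then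
        (if Even k then (-1 : ℤ) else 1) * #(Nat.Partition.odds (n - m * k)) else 0 := by
  unfold distinctPartsTotal
  simp_rw [card_parts_eq_sum]
  rw [Finset.sum_comm, Nat.cast_sum]
  refine Finset.sum_congr rfl fun m hm => ?_
  rw [← card_distincts_mem (mem_Icc.1 hm).1 n n le_rfl, Finset.card_filter]
  congr 1
  refine Finset.sum_congr rfl fun p hp => ?_
  exact Multiset.count_eq_of_nodup (mem_filter.1 hp).2

/-- The number of partitions of `n` in which the set of even parts has exactly one element
equals `b n`. -/
theorem statement1 (n : ℕ) (hn : 0 < n) :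
    ((Finset.univ.filter (fun p : Nat.Partition n =>
        (p.parts.toFinset.filter (fun x => Even x)).card = 1)).card : ℤ) = b n := by
  rw [card_one_even_eq, b, if_pos (by positivity), Int.toNat_natCast, distinctPartsTotal_eq,
    oddPartsTotal_eq]
  -- the exchange of the two parameters `m` and `k`
  rw [Finset.sum_comm (f := fun m k => if m * k ≤ n then
    (if Even k then (-1 : ℤ) else 1) * #(Nat.Partition.odds (n - m * k)) else 0)]
  push_cast
  rw [← Finset.sum_sub_distrib]
  refine Finset.sum_congr rfl fun m _ => ?_
  rw [← Finset.sum_sub_distrib]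
  refine Finset.sum_congr rfl fun k _ => ?_
  rw [mul_comm k m]
  by_cases h : m * k ≤ n <;> by_cases he : Even m <;> simp [h, he]
end

section
/- For every positive integer n, b(n), the difference between the total number of parts in all partitions of n into odd parts and the total number of parts in all partitions of n into distinct parts, equals the number of partitions of n in which exactly one part is repeated (i.e., exactly one distinct value occurs with multiplicity at least 2, and every other value occurs at most once). -/
/-!
Write `q m` for the number of partitions of `m` into distinct parts, which by Euler's theorem is
also the number of partitions of `m` into odd parts; put `q m = 0` for `m < 0`.

A partition into odd parts has `∑ i, #{j ≥ 1 | j ≤ multiplicity of i}` parts. Removing `j` copies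
of an odd number `i` shows that the odd partitions of `n` in which `i` occurs at least `j` times are
counted by `q (n - j * i)`. So the odd partitions of `n` have `∑ i odd, ∑ j ≥ 1, q (n - j * i)`
parts in total, and since `q (n - j * i)` is symmetric in `i` and `j` this is
`∑ i ≥ 1, ∑ j odd, q (n - j * i)`.

On the other hand, fix `i` and consider the partitions of `n` in which `i` occurs and no part other
than `i` is repeated. Let `j` be the largest odd number not exceeding the multiplicity of `i`;
removing `j` copies of `i` leaves a partition of `n - j * i` into distinct parts, and this is
reversible. So these partitions are counted by `∑ j odd, q (n - j * i)`
(`card_isDistinctExcept`).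
Those where `i` occurs once are the partitions into distinct parts containing `i`, which sum over
`i` to the total number of parts in distinct partitions; those where `i` occurs at least twice are
the partitions whose only repeated part is `i`, which sum over `i` to the right-hand side.
-/

open Nat Finset

/-- No value other than `i` occurs more than once in `s`; the multiplicity of `i` is arbitrary. -/
def IsDistinctExcept (i : ℕ) (s : Multiset ℕ) : Prop :=
  ∀ x, x ≠ i → s.count x ≤ 1

/-- The number of partitions of `n - m` into distinct parts, taken to be `0` when `m > n`. -/
def distinctCountSub (n m : ℕ) : ℕ :=
  if m ≤ n then #(Nat.Partition.distincts (n - m)) else 0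

/-- Removing `k` copies of `i` is a bijection from the partitions of `n` satisfying `A` to the
partitions of `n - k * i` satisfying `B`, provided that `A` forces at least `k` copies of `i` and
corresponds to `B` under adding `k` copies of `i`. -/
lemma card_filter_add_replicate {n i k : ℕ} (A B : Multiset ℕ → Prop) [DecidablePred A]
    [DecidablePred B] (hi : 0 < i) (hA : ∀ s, A s → k ≤ s.count i)
    (hAB : ∀ s, A (s + Multiset.replicate k i) ↔ B s) :
    #{p : n.Partition | A p.parts} =
      if k * i ≤ n then #{p : (n - k * i).Partition | B p.parts} else 0 := by
  have hsplit : ∀ p : n.Partition, A p.parts →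
      p.parts - Multiset.replicate k i + Multiset.replicate k i = p.parts := fun p hp =>
    tsub_add_cancel_of_le (Multiset.le_count_iff_replicate_le.1 (hA _ hp))
  have hsum : ∀ p : n.Partition, A p.parts →
      (p.parts - Multiset.replicate k i).sum + k * i = n := fun p hp => by
    have h := congrArg Multiset.sum (hsplit p hp)
    simpa [p.parts_sum] using h
  split_ifs with hn
  · refine Finset.card_bij'
      (fun p hp => ⟨p.parts - Multiset.replicate k i,
        fun h => p.parts_pos (Multiset.mem_of_le tsub_le_self h), ?_⟩)
      (fun p _ => ⟨p.parts + Multiset.replicate k i, fun h => ?_, ?_⟩) ?_ ?_ ?_ ?_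
    · have := hsum p (by simpa using hp)
      omega
    · rcases Multiset.mem_add.1 h with h | h
      · exact p.parts_pos h
      · rw [Multiset.eq_of_mem_replicate h]; exact hi
    · simp only [Multiset.sum_add, p.parts_sum, Multiset.sum_replicate, smul_eq_mul]
      omega
    · intro p hp
      have hp' : A p.parts := by simpa using hp
      simp only [mem_filter, mem_univ, true_and]
      rw [← hAB, hsplit p hp']
      exact hp'
    · intro p hp
      simpa [hAB] using hp
    · intro p hp
      exact Nat.Partition.ext (hsplit p (by simpa using hp))
    · intro p hp
      exact Nat.Partition.ext (by simp)
  · rw [Finset.card_eq_zero, Finset.filter_eq_empty_iff]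
    intro p _ hp
    have := hsum p hp
    omega

lemma mem_Icc_of_mem_parts {n i : ℕ} {p : n.Partition} (h : i ∈ p.parts) : i ∈ Icc 1 n :=
  mem_Icc.2 ⟨p.parts_pos h, p.le_of_mem_parts h⟩

lemma count_le_of_partition {n : ℕ} (p : n.Partition) (i : ℕ) : p.parts.count i ≤ n := by
  refine (Multiset.count_le_card _ _).trans ?_
  have h := Multiset.card_nsmul_le_sum (s := p.parts) (a := 1) (fun x hx => p.parts_pos hx)
  simpa [p.parts_sum] using h

lemma card_parts_eq_sum_count {n : ℕ} (p : n.Partition) :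
    Multiset.card p.parts = ∑ i ∈ Icc 1 n, p.parts.count i :=
  (Multiset.sum_count_eq_card fun _ h => mem_Icc_of_mem_parts h).symm

lemma distincts_eq_filter (n : ℕ) :
    Nat.Partition.distincts n = ({p : n.Partition | p.parts.Nodup} : Finset _) := rfl

lemma odds_eq_filter (n : ℕ) :
    Nat.Partition.odds n = ({p : n.Partition | ∀ x ∈ p.parts, ¬ Even x} : Finset _) := rfl

/-- The odd partitions of `n` in which `i` occurs at least `j` times correspond, when `i` is odd, to
the odd partitions of `n - j * i`, which Euler's theorem trades for distinct ones. -/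
lemma card_odds_le_count (n i j : ℕ) (hi : 0 < i) (hj : 0 < j) :
    #{p ∈ Nat.Partition.odds n | j ≤ p.parts.count i} =
      if Odd i then distinctCountSub n (j * i) else 0 := by
  split_ifs with hodd
  · rw [odds_eq_filter, filter_filter,
      card_filter_add_replicate (i := i) (k := j)
        (fun s => (∀ x ∈ s, ¬ Even x) ∧ j ≤ s.count i) (fun s => ∀ x ∈ s, ¬ Even x) hi
        (fun s hs => hs.2) ?_]
    · rw [distinctCountSub, ← Nat.Partition.card_odds_eq_card_distincts, odds_eq_filter]
    · intro s
      simp only [Multiset.mem_add, Multiset.mem_replicate, Multiset.count_add,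
        Multiset.count_replicate_self]
      refine ⟨fun h x hx => h.1 x (Or.inl hx), fun h => ⟨?_, by omega⟩⟩
      rintro x (hx | ⟨-, rfl⟩)
      · exact h x hx
      · exact Nat.not_even_iff_odd.2 hodd
  · rw [Finset.card_eq_zero, Finset.filter_eq_empty_iff]
    intro p hp hc
    rw [odds_eq_filter, mem_filter] at hp
    exact hodd (Nat.not_even_iff_odd.1
      (hp.2 i (Multiset.count_pos.1 (by omega))))

lemma oddPartsTotal_eq_sum (n : ℕ) :
    oddPartsTotal n =
      ∑ i ∈ Icc 1 n, ∑ j ∈ Icc 1 n, if Odd i then distinctCountSub n (j * i) else 0 := by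
  have hcount : ∀ p : n.Partition, ∀ i,
      p.parts.count i = ∑ j ∈ Icc 1 n, if j ≤ p.parts.count i then 1 else 0 := by
    intro p i
    have hle := count_le_of_partition p i
    rw [← Finset.card_filter]
    have : {j ∈ Icc 1 n | j ≤ p.parts.count i} = Icc 1 (p.parts.count i) := by
      ext j; simp only [mem_filter, mem_Icc]; omega
    rw [this, Nat.card_Icc]; omega
  calc oddPartsTotal n
      = ∑ p ∈ Nat.Partition.odds n, ∑ i ∈ Icc 1 n, ∑ j ∈ Icc 1 n,
          if j ≤ p.parts.count i then 1 else 0 :=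
        sum_congr rfl fun p _ => by
          rw [card_parts_eq_sum_count]; exact sum_congr rfl fun i _ => hcount p i
    _ = ∑ i ∈ Icc 1 n, ∑ j ∈ Icc 1 n, ∑ p ∈ Nat.Partition.odds n,
          if j ≤ p.parts.count i then 1 else 0 := by
        rw [sum_comm]; exact sum_congr rfl fun i _ => sum_comm
    _ = _ := by
        refine sum_congr rfl fun i hi => sum_congr rfl fun j hj => ?_
        rw [← Finset.card_filter]
        exact card_odds_le_count n i j (mem_Icc.1 hi).1 (mem_Icc.1 hj).1

open Classical in
/-- In a partition where only `i` may be repeated and whose multiplicity of `i` is `j` or `j + 1`,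
removing `j` copies of `i` leaves a partition into distinct parts, and this is reversible. For
odd `j` these pairs `{j, j + 1}` partition the positive multiplicities. -/
lemma card_isDistinctExcept_count (n i j : ℕ) (hi : 0 < i) :
    #{p : n.Partition | IsDistinctExcept i p.parts ∧
      (p.parts.count i = j ∨ p.parts.count i = j + 1)} = distinctCountSub n (j * i) := by
  rw [card_filter_add_replicate (i := i) (k := j)
    (fun s => IsDistinctExcept i s ∧ (s.count i = j ∨ s.count i = j + 1))
    (fun s => s.Nodup) hi (fun s hs => by omega) ?_]
  · rw [distinctCountSub, distincts_eq_filter]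
  · intro s
    simp only [IsDistinctExcept, Multiset.nodup_iff_count_le_one, Multiset.count_add,
      Multiset.count_replicate]
    constructor
    · rintro ⟨h, hc⟩ x
      by_cases hx : x = i
      · subst hx; simp only [if_true] at hc; omega
      · have := h x hx
        omega
    · intro h
      refine ⟨fun x hx => ?_, ?_⟩
      · rw [if_neg (Ne.symm hx)]; exact h x
      · have := h i; simp only [if_true]; omega

open Classical in
/-- Grouping the partitions in which `i` occurs and nothing else is repeated by the largest odd `j`
not exceeding the multiplicity of `i`. -/
lemma card_isDistinctExcept (n i : ℕ) (hi : 0 < i) :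
    #{p : n.Partition | IsDistinctExcept i p.parts ∧ 1 ≤ p.parts.count i} =
      ∑ j ∈ Icc 1 n, if Odd j then distinctCountSub n (j * i) else 0 := by
  rw [← sum_filter]
  -- The fibres are those of the map sending `p` to the largest odd `j ≤ p.parts.count i`.
  rw [Finset.card_eq_sum_card_fiberwise
    (f := fun p : n.Partition => 2 * ((p.parts.count i - 1) / 2) + 1)
    (t := {j ∈ Icc 1 n | Odd j})]
  · refine sum_congr rfl fun j hj => ?_
    rw [← card_isDistinctExcept_count n i j hi, filter_filter]
    obtain ⟨hj, m, rfl⟩ := mem_filter.1 hj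
    congr 1
    ext p
    simp only [mem_filter, mem_univ, true_and, and_assoc]
    refine and_congr_right fun _ => ?_
    omega
  · intro p hp
    have hc : 1 ≤ p.parts.count i := by simpa using (mem_filter.1 hp).2.2
    have := count_le_of_partition p i
    simp only [coe_filter, mem_Icc, Set.mem_ofPred_eq]
    exact ⟨by omega, odd_two_mul_add_one _⟩

open Classical in
lemma distinctPartsTotal_eq_sum (n : ℕ) :
    distinctPartsTotal n =
      ∑ i ∈ Icc 1 n,
        #{p : n.Partition | IsDistinctExcept i p.parts ∧ p.parts.count i = 1} := by
  have h : ∀ i, #{p : n.Partition | IsDistinctExcept i p.parts ∧ p.parts.count i = 1} =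
      ∑ p ∈ Nat.Partition.distincts n, p.parts.count i := by
    intro i
    rw [Finset.card_filter, distincts_eq_filter, sum_filter]
    refine sum_congr rfl fun p _ => ?_
    by_cases hp : p.parts.Nodup
    · have h1 := Multiset.nodup_iff_count_le_one.1 hp
      have h2 : IsDistinctExcept i p.parts := fun x _ => h1 x
      have := h1 i
      simp only [h2, hp, true_and, if_true]
      split_ifs <;> omega
    · rw [if_neg hp, if_neg]
      rintro ⟨h1, h2⟩
      refine hp (Multiset.nodup_iff_count_le_one.2 fun x => ?_)
      by_cases hx : x = i
      · rw [hx, h2]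
      · exact h1 x hx
  simp only [h]
  rw [sum_comm]
  exact sum_congr rfl fun p _ => card_parts_eq_sum_count p

open Classical in
lemma card_one_repeated_eq_sum (n : ℕ) :
    #{p : n.Partition | #{x ∈ p.parts.toFinset | 2 ≤ p.parts.count x} = 1} =
      ∑ i ∈ Icc 1 n,
        #{p : n.Partition | IsDistinctExcept i p.parts ∧ 2 ≤ p.parts.count i} := by
  simp only [Finset.card_filter _ (univ : Finset n.Partition)]
  rw [sum_comm]
  refine sum_congr rfl fun p _ => ?_
  rw [← Finset.card_filter]
  have key : ∀ i, IsDistinctExcept i p.parts ∧ 2 ≤ p.parts.count i ↔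
      ({x ∈ p.parts.toFinset | 2 ≤ p.parts.count x} : Finset ℕ) = {i} := by
    intro i
    have hmem : ∀ x, x ∈ ({x ∈ p.parts.toFinset | 2 ≤ p.parts.count x} : Finset ℕ) ↔
        2 ≤ p.parts.count x := fun x => by
      rw [mem_filter, Multiset.mem_toFinset, ← Multiset.count_pos]; omega
    rw [Finset.ext_iff]
    simp only [hmem, mem_singleton]
    constructor
    · rintro ⟨h1, h2⟩ x
      refine ⟨fun hx => ?_, fun hx => hx ▸ h2⟩
      by_contra hne
      have := h1 x hne
      omega
    · intro h
      refine ⟨fun x hx => ?_, (h i).2 rfl⟩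
      have := mt (h x).1 hx
      omega
  split_ifs with h
  · obtain ⟨a, ha⟩ := Finset.card_eq_one.1 h
    symm
    rw [Finset.card_eq_one]
    refine ⟨a, ?_⟩
    ext i
    rw [mem_filter, key, ha, mem_singleton, Finset.singleton_inj]
    refine ⟨fun hi => hi.2.symm, fun hi => ⟨?_, hi.symm⟩⟩
    have h2 := ((key a).2 ha).2
    rw [hi]
    exact mem_Icc_of_mem_parts (p := p) (Multiset.count_pos.1 (by omega))
  · symm
    rw [Finset.card_eq_zero, Finset.filter_eq_empty_iff]
    intro i _ hi
    exact h (Finset.card_eq_one.2 ⟨i, (key i).1 hi⟩)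

lemma oddPartsTotal_eq_add (n : ℕ) :
    oddPartsTotal n = distinctPartsTotal n +
      #{p : n.Partition | #{x ∈ p.parts.toFinset | 2 ≤ p.parts.count x} = 1} := by
  classical
  rw [oddPartsTotal_eq_sum, distinctPartsTotal_eq_sum, card_one_repeated_eq_sum, sum_comm,
    ← sum_add_distrib]
  -- After exchanging the sums, the copies `j` of the odd part `i` become `i` copies of `j`.
  refine sum_congr rfl fun i hi => ?_
  simp only [mul_comm i]
  rw [← card_isDistinctExcept n i (mem_Icc.1 hi).1, ← card_union_of_disjoint]
  · congr 1
    ext p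
    simp only [mem_union, mem_filter, mem_univ, true_and, ← and_or_left]
    refine and_congr_right fun _ => ?_
    omega
  · rw [Finset.disjoint_filter]
    rintro p - ⟨-, h1⟩ ⟨-, h2⟩
    omega


/-- `b n` equals the number of partitions of `n` in which exactly one distinct value occurs
with multiplicity at least `2` (so every other value occurs at most once). -/
theorem statement2 (n : ℕ) (hn : 0 < n) :
    b n = ((Finset.univ.filter (fun p : Nat.Partition n =>
        (p.parts.toFinset.filter (fun x => 2 ≤ p.parts.count x)).card = 1)).card : ℤ) := by
  have h := oddPartsTotal_eq_add n
  simp only [b, Int.toNat_natCast, Nat.cast_nonneg, if_true]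
  rw [h]
  push_cast
  ring
end

section
/- For every positive integer n, the number of divisors of n equals Σ_{j=1}^{n} s(j) · p(n−j), where p is the partition function with p(0)=1. -/
/-!
Write `w D = -(-1)^|D| |D|` for a finite set `D` of positive integers. A partition into distinct
parts is such a set, so `s j` is the sum of `w D` over the sets `D` with element sum `j`
(`s_eq_sum_signedCard`). A partition of `n - j` together with a set `D` of sum `j` is the same as a
partition of `n` whose set of part sizes contains `D`, by adjoining the elements of `D` as extra
parts (`card_filter_le_parts`). Exchanging the order of summation,
`∑ j, s j * p (n - j) = ∑ P ⊢ n, ∑ D ⊆ supp P, w D`.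
The inner sum is `1` if `P` has exactly one part size and `0` otherwise
(`sum_powerset_signedCard`), and the partitions of `n` with a single part size `d` correspond to
the divisors `d` of `n` (`card_filter_card_toFinset_eq_one`).
-/

open Nat Finset

/-- The signed weight `-(-1)^|D| * |D|` with which the set `D` of distinct parts contributes
to `s`. -/
def signedCard (D : Finset ℕ) : ℤ := -((-1) ^ D.card * (D.card : ℤ))

theorem sum_powerset_signedCard (T : Finset ℕ) :
    ∑ D ∈ T.powerset, signedCard D = if T.card = 1 then 1 else 0 := by
  induction T using Finset.induction_on with
  | empty => simp [signedCard]
  | insert a T ha ih =>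
    -- Pairing `D` with `insert a D` cancels the factor `|D|`, leaving `∑ (-1)^|D|`.
    have key : ∑ D ∈ T.powerset, signedCard (insert a D) =
        ∑ D ∈ T.powerset, ((-1) ^ D.card - signedCard D) := by
      refine Finset.sum_congr rfl fun D hD => ?_
      have haD : a ∉ D := fun h => ha (Finset.mem_powerset.1 hD h)
      rw [signedCard, signedCard, Finset.card_insert_of_notMem haD]
      push_cast
      ring
    rw [Finset.sum_powerset_insert ha, key, Finset.sum_sub_distrib,
      Finset.sum_powerset_neg_one_pow_card, Finset.card_insert_of_notMem ha]
    simp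

theorem s_eq_sum_signedCard {n j : ℕ} (hj : j ≤ n) :
    s j = ∑ D ∈ (Finset.Icc 1 n).powerset with D.sum id = j, signedCard D := by
  have nodup : ∀ P ∈ Nat.Partition.distincts j, P.parts.Nodup := fun P hP => by
    simpa [Nat.Partition.distincts] using hP
  unfold s
  refine Finset.sum_bij (fun P _ => P.parts.toFinset) ?_ ?_ ?_ ?_
  · intro P hP
    simp only [Finset.mem_filter, Finset.mem_powerset]
    refine ⟨fun x hx => ?_, ?_⟩
    · rw [Multiset.mem_toFinset] at hx
      exact Finset.mem_Icc.2 ⟨P.parts_pos hx, (P.le_of_mem_parts hx).trans hj⟩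
    · rw [Finset.sum, Multiset.toFinset_val, (nodup P hP).dedup, Multiset.map_id, P.parts_sum]
  · intro P hP Q hQ h
    apply Nat.Partition.ext
    have h' := congrArg Finset.val h
    simpa only [Multiset.toFinset_val, (nodup P hP).dedup, (nodup Q hQ).dedup] using h'
  · intro D hD
    simp only [Finset.mem_filter, Finset.mem_powerset] at hD
    refine ⟨⟨D.val, fun {i} hi => (Finset.mem_Icc.1 (hD.1 hi)).1, ?_⟩, ?_, ?_⟩
    · rw [← hD.2, Finset.sum, Multiset.map_id]
    · simp [Nat.Partition.distincts, D.nodup]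
    · simp
  · intro P hP
    rw [signedCard, Multiset.toFinset_card_of_nodup (nodup P hP)]
    split_ifs with h
    · simp [h.neg_one_pow]
    · simp [(Nat.not_odd_iff_even.1 h).neg_one_pow]

/-- Removing one copy of each element of `D` identifies the partitions of `n` having all elements
of `D` among their parts with the partitions of `n - ∑ D`. -/
theorem card_filter_le_parts {n : ℕ} {D : Finset ℕ} (h0 : 0 ∉ D) (hD : D.sum id ≤ n) :
    (Finset.univ.filter fun P : Nat.Partition n => D ⊆ P.parts.toFinset).card =
      pN (n - D.sum id) := by
  have hsum : D.val.sum = D.sum id := by rw [Finset.sum, Multiset.map_id]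
  have le_iff : ∀ P : Nat.Partition n, D ⊆ P.parts.toFinset ↔ D.val ≤ P.parts := fun P => by
    rw [Multiset.le_iff_subset D.nodup]
    simp [Finset.subset_iff, Multiset.subset_iff]
  unfold pN
  rw [← Finset.card_univ]
  symm
  refine Finset.card_bij
    (fun Q _ => (⟨D.val + Q.parts, fun {i} hi => ?_, ?_⟩ : Nat.Partition n)) ?_ ?_ ?_
  · rcases Multiset.mem_add.1 hi with h | h
    · exact Nat.pos_of_ne_zero fun h' => h0 (h' ▸ h)
    · exact Q.parts_pos h
  · rw [Multiset.sum_add, Q.parts_sum, hsum]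
    omega
  · intro Q _
    simp [le_iff]
  · intro Q _ Q' _ h
    exact Nat.Partition.ext (add_left_cancel (congrArg Nat.Partition.parts h))
  · intro P hP
    obtain ⟨U, hU⟩ := Multiset.le_iff_exists_add.1 ((le_iff P).1 (Finset.mem_filter.1 hP).2)
    refine ⟨⟨U, fun {i} hi => P.parts_pos (hU ▸ Multiset.mem_add.2 (Or.inr hi)), ?_⟩,
      Finset.mem_univ _, Nat.Partition.ext hU.symm⟩
    have := P.parts_sum
    rw [hU, Multiset.sum_add, hsum] at this
    omega

theorem card_filter_card_toFinset_eq_one {n : ℕ} (hn : 0 < n) :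
    (Finset.univ.filter fun P : Nat.Partition n => P.parts.toFinset.card = 1).card =
      n.divisors.card := by
  symm
  refine Finset.card_bij
    (fun d hd => (⟨Multiset.replicate (n / d) d, fun {i} hi => ?_, ?_⟩ : Nat.Partition n)) ?_ ?_ ?_
  · rw [Multiset.eq_of_mem_replicate hi]
    exact Nat.pos_of_mem_divisors hd
  · rw [Multiset.sum_replicate, smul_eq_mul, Nat.div_mul_cancel (Nat.dvd_of_mem_divisors hd)]
  · intro d hd
    have : n / d ≠ 0 := (Nat.div_pos (Nat.divisor_le hd) (Nat.pos_of_mem_divisors hd)).ne'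
    simp [Multiset.toFinset_replicate, this]
  · intro d hd d' hd' h
    have hpos := (Nat.div_pos (Nat.divisor_le hd) (Nat.pos_of_mem_divisors hd)).ne'
    have h' : Multiset.replicate (n / d) d = Multiset.replicate (n / d') d' :=
      congrArg Nat.Partition.parts h
    exact Multiset.eq_of_mem_replicate (h' ▸ Multiset.mem_replicate.2 ⟨hpos, rfl⟩)
  · intro P hP
    obtain ⟨d, hd⟩ := Finset.card_eq_one.1 (Finset.mem_filter.1 hP).2
    have hmem : d ∈ P.parts := by
      rw [← Multiset.mem_toFinset, hd]
      exact Finset.mem_singleton_self d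
    have hrep : P.parts = Multiset.replicate (Multiset.card P.parts) d :=
      Multiset.eq_replicate_card.2 fun x hx => by
        rw [← Multiset.mem_toFinset, hd] at hx
        exact Finset.mem_singleton.1 hx
    have hmul : Multiset.card P.parts * d = n := by
      rw [← smul_eq_mul, ← Multiset.sum_replicate, ← hrep, P.parts_sum]
    refine ⟨d, Nat.mem_divisors.2 ⟨⟨_, by rw [mul_comm, hmul]⟩, hn.ne'⟩, Nat.Partition.ext ?_⟩
    have hdiv : n / d = Multiset.card P.parts :=
      Nat.div_eq_of_eq_mul_left (P.parts_pos hmem) hmul.symm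
    change Multiset.replicate (n / d) d = P.parts
    rw [hdiv, ← hrep]

/-- The number of divisors of `n` equals `∑_{j=1}^{n} s(j) · p(n-j)`. -/
theorem statement4 (n : ℕ) (hn : 0 < n) :
    (n.divisors.card : ℤ) = ∑ j ∈ Finset.Icc 1 n, s j * (pN (n - j) : ℤ) := by
  have supp_sub : ∀ P : Nat.Partition n, P.parts.toFinset ⊆ Finset.Icc 1 n := fun P x hx => by
    rw [Multiset.mem_toFinset] at hx
    exact Finset.mem_Icc.2 ⟨P.parts_pos hx, P.le_of_mem_parts hx⟩
  have supp_sum : ∀ (P : Nat.Partition n) (D : Finset ℕ), D ⊆ P.parts.toFinset →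
      D.sum id ≤ n := fun P D hD => by
    have hle : D.val ≤ P.parts := (Multiset.le_iff_subset D.nodup).2 fun x hx =>
      Multiset.mem_toFinset.1 (hD hx)
    obtain ⟨U, hU⟩ := Multiset.le_iff_exists_add.1 hle
    have := P.parts_sum
    rw [hU, Multiset.sum_add] at this
    rw [Finset.sum, Multiset.map_id]
    omega
  calc (n.divisors.card : ℤ)
      = ∑ P : Nat.Partition n, ∑ D ∈ P.parts.toFinset.powerset, signedCard D := by
        simp_rw [sum_powerset_signedCard]
        rw [← card_filter_card_toFinset_eq_one hn, Finset.sum_boole]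
    _ = ∑ P : Nat.Partition n, ∑ D ∈ (Finset.Icc 1 n).powerset,
          if D ⊆ P.parts.toFinset then signedCard D else 0 := by
        refine Finset.sum_congr rfl fun P _ => ?_
        rw [← Finset.sum_filter]
        refine Finset.sum_congr (Finset.ext fun D => ?_) fun _ _ => rfl
        simp only [Finset.mem_filter, Finset.mem_powerset]
        exact ⟨fun h => ⟨h.trans (supp_sub P), h⟩, fun h => h.2⟩
    _ = ∑ D ∈ (Finset.Icc 1 n).powerset, signedCard D *
          ((Finset.univ.filter fun P : Nat.Partition n => D ⊆ P.parts.toFinset).card : ℤ) := by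
        rw [Finset.sum_comm]
        refine Finset.sum_congr rfl fun D _ => ?_
        rw [← Finset.sum_filter, Finset.sum_const, nsmul_eq_mul, mul_comm]
    _ = ∑ D ∈ (Finset.Icc 1 n).powerset with D.sum id ∈ Finset.Icc 1 n,
          signedCard D * (pN (n - D.sum id) : ℤ) := by
        rw [Finset.sum_filter]
        refine Finset.sum_congr rfl fun D hD => ?_
        have hD' := Finset.mem_powerset.1 hD
        split_ifs with h
        · rw [card_filter_le_parts (fun h0 => by simpa using hD' h0) (Finset.mem_Icc.1 h).2]
        · -- Sets of sum exceeding `n` lie in no partition of `n`; the empty set has weight `0`.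
          rcases D.eq_empty_or_nonempty with rfl | ⟨x, hx⟩
          · simp [signedCard]
          · have hx1 : 1 ≤ x := (Finset.mem_Icc.1 (hD' hx)).1
            have hxs : x ≤ D.sum id :=
              Finset.single_le_sum (f := id) (fun i _ => Nat.zero_le i) hx
            rw [Finset.filter_false_of_mem]
            · simp
            · intro P _ hP
              exact h (Finset.mem_Icc.2 ⟨hx1.trans hxs, supp_sum P D hP⟩)
    _ = ∑ j ∈ Finset.Icc 1 n, s j * (pN (n - j) : ℤ) := by
        rw [← Finset.sum_fiberwise_of_maps_to (t := Finset.Icc 1 n) (g := fun D => D.sum id)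
          (s := (Finset.Icc 1 n).powerset.filter fun D => D.sum id ∈ Finset.Icc 1 n) fun D hD => (Finset.mem_filter.1 hD).2]
        refine Finset.sum_congr rfl fun j hj => ?_
        rw [s_eq_sum_signedCard (Finset.mem_Icc.1 hj).2, Finset.sum_mul, Finset.filter_filter]
        refine Finset.sum_congr (Finset.filter_congr fun D _ => ?_) fun D hD => ?_
        · exact ⟨fun h => h.2, fun h => ⟨h ▸ hj, h⟩⟩
        · rw [(Finset.mem_filter.1 hD).2]
end

section
/- For every integer n ≥ 1, Σ_{k=−∞}^{∞} (−1)^k b(n − k(3k−1)/2) equals s(n/2) if n is even, and equals 0 if n is odd (the sum over all integers k, positive and negative, is finite since b vanishes on negative arguments). -/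
/-!
The numbers of parts are read off from generating functions whose weight variable is specialised
to a dual number `1 + ε`, so that the `ε`-part of a product is its derivative at weight `1`.
For a weight `z`, put

`O(z) = ∏_{i odd} (1 - z Xⁱ)⁻¹`,  `D(z) = ∏ᵢ (1 + z Xⁱ)`,  so that  `D(-z) = ∏ᵢ (1 - z Xⁱ)`.

Comparing factors gives two identities (`oddGF_mul_distinctGF` and `distinctGF_mul_distinctGF_neg`):

* `O(z) D(-z) = D(-z)(X²)`, where `(X²)` denotes the substitution `X ↦ X²`;
* `D(z) D(-z) = D(-z²)(X²)`.

Take `z = 1 + ε`, so `z² = 1 + 2ε`. Write `P` for the generating function of both `odds` and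
`distincts` (they agree by Euler's theorem), `o`, `d`, `σ` for those of `oddPartsTotal`,
`distinctPartsTotal`, `s`, and `F = ∏ᵢ (1 - Xⁱ)`. Then `O(z) = P + ε o`, `D(z) = P + ε d` and
`D(-z) = F - ε σ`, and the `ε`-parts of the two identities are
`o F - P σ = -σ(X²)` and `d F - P σ = -2 σ(X²)`. Subtracting, `(o - d) F = σ(X²)`. By the pentagonal
number theorem the coefficient of `Xⁿ` on the left is the sum in question.
-/

open Nat Finset

section GeneratingFunctions

open PowerSeries
open scoped PowerSeries.WithPiTopology

variable {R : Type*} [CommRing R]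

/-- The generating function `∏_{i odd} (1 - z Xⁱ)⁻¹` of partitions into odd parts, each part
weighted by `z`. -/
noncomputable def oddGF (z : R) : R⟦X⟧ :=
  Nat.Partition.genFun fun i c ↦ if Odd i then z ^ c else 0

/-- The generating function `∏ᵢ (1 + z Xⁱ)` of partitions into distinct parts, each part weighted
by `z`. -/
noncomputable def distinctGF (z : R) : R⟦X⟧ :=
  Nat.Partition.genFun fun _ c ↦ if c = 1 then z else 0

lemma coeff_oddGF (z : R) (n : ℕ) :
    (oddGF z).coeff n = ∑ p ∈ Nat.Partition.odds n, z ^ Multiset.card p.parts := by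
  rw [oddGF, Nat.Partition.coeff_genFun, Nat.Partition.odds, Nat.Partition.restricted,
    Finset.sum_filter]
  refine Finset.sum_congr rfl fun p _ ↦ ?_
  rw [Finsupp.prod]
  split_ifs with h
  · rw [← Multiset.toFinset_sum_count_eq, ← Finset.prod_pow_eq_pow_sum]
    refine Finset.prod_congr (by simp) fun i hi ↦ ?_
    have : i ∈ p.parts := by simpa using hi
    simp [Nat.not_even_iff_odd.mp (h i this)]
  · push Not at h
    obtain ⟨i, hi, he⟩ := h
    exact Finset.prod_eq_zero (i := i) (by simpa using hi) (by simp [Nat.not_odd_iff_even.mpr he])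

lemma coeff_distinctGF (z : R) (n : ℕ) :
    (distinctGF z).coeff n = ∑ p ∈ Nat.Partition.distincts n, z ^ Multiset.card p.parts := by
  rw [distinctGF, Nat.Partition.coeff_genFun, Nat.Partition.distincts, Finset.sum_filter]
  refine Finset.sum_congr rfl fun p _ ↦ ?_
  rw [Finsupp.prod]
  split_ifs with h
  · rw [← Multiset.toFinset_card_of_nodup h, ← Finset.prod_const]
    refine Finset.prod_congr (by simp) fun i hi ↦ ?_
    have : i ∈ p.parts := by simpa using hi
    simp [Multiset.count_eq_one_of_mem h this]
  · rw [Multiset.nodup_iff_count_le_one] at h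
    push Not at h
    obtain ⟨i, hi⟩ := h
    refine Finset.prod_eq_zero (i := i) ?_ ?_
    · simpa using Multiset.count_pos.mp (by omega)
    · simp [hi.ne']

variable [TopologicalSpace R] [T2Space R]

lemma hasProd_distinctGF (z : R) :
    HasProd (fun i ↦ 1 + C z * X ^ (i + 1)) (distinctGF z) := by
  convert! Nat.Partition.hasProd_genFun (fun _ c ↦ if c = 1 then z else 0) using 1
  ext1 i
  rw [tsum_eq_single 0 (by intro j hj; simp [hj])]
  simp [smul_eq_C_mul]

lemma hasProd_oddGF [IsTopologicalRing R] (z : R) :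
    HasProd (fun i ↦ if Odd (i + 1) then ∑' j : ℕ, (C z * X ^ (i + 1)) ^ j else 1) (oddGF z) := by
  convert! Nat.Partition.hasProd_genFun (fun i c ↦ if Odd i then z ^ c else 0) using 1
  ext1 i
  split_ifs with h
  · have hs : Summable fun j : ℕ ↦ (C z * X ^ (i + 1)) ^ j :=
      WithPiTopology.summable_pow_of_constantCoeff_eq_zero (by simp)
    rw [hs.tsum_eq_zero_add]
    simp [smul_eq_C_mul, mul_pow, pow_mul]
  · simp

/-- The substitution `X ↦ X²` acts on the product `∏ᵢ (1 + z Xⁱ)` factor by factor. -/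
lemma hasProd_expand_distinctGF (z : R) :
    HasProd (fun i ↦ 1 + C z * X ^ (2 * (i + 1)))
      ((distinctGF z).expand 2 two_ne_zero) := by
  have hc : Continuous (expand (R := R) 2 two_ne_zero) := by
    rw [continuous_iff_continuousAt]
    intro f
    rw [ContinuousAt, WithPiTopology.tendsto_iff_coeff_tendsto]
    intro n
    simp_rw [coeff_expand]
    split_ifs
    · exact (WithPiTopology.continuous_coeff R _).continuousAt
    · exact tendsto_const_nhds
  convert! (hasProd_distinctGF z).map (expand (R := R) 2 two_ne_zero) hc using 1
  ext1 i
  simp [expand_C, pow_mul]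

lemma oddGF_mul_distinctGF [IsTopologicalRing R] (z : R) :
    oddGF z * distinctGF (-z) = (distinctGF (-z)).expand 2 two_ne_zero := by
  have h₁ := (hasProd_oddGF z).mul (hasProd_distinctGF (-z))
  -- Factors attached to an odd part `i + 1` cancel to `1`; the even parts are at `i = 2j + 1`.
  have hinj : Function.Injective fun i : ℕ ↦ 2 * i + 1 := fun i j h ↦ by grind
  have hodd (i : ℕ) (hi : Odd (i + 1)) :
      (∑' j : ℕ, (C z * X ^ (i + 1)) ^ j) * (1 + C (-z) * X ^ (i + 1)) = (1 : R⟦X⟧) := by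
    rw [map_neg, neg_mul, ← sub_eq_add_neg]
    exact WithPiTopology.tsum_pow_mul_one_sub_of_constantCoeff_eq_zero (by simp)
  rw [← hinj.hasProd_iff] at h₁
  · refine h₁.unique ?_
    convert! hasProd_expand_distinctGF (-z) using 1
    ext1 i
    have : ¬ Odd (2 * i + 1 + 1) := by grind
    simp [this, mul_add, add_assoc]
  · intro i hi
    have : Odd (i + 1) := by
      by_contra h
      exact hi ⟨i / 2, by grind⟩
    rw [if_pos this, hodd i this]

lemma distinctGF_mul_distinctGF_neg [IsTopologicalRing R] (z : R) :
    distinctGF z * distinctGF (-z) = (distinctGF (-z ^ 2)).expand 2 two_ne_zero := by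
  refine ((hasProd_distinctGF z).mul (hasProd_distinctGF (-z))).unique ?_
  convert! hasProd_expand_distinctGF (-z ^ 2) using 1
  ext1 i
  simp only [map_neg, map_pow]
  ring

end GeneratingFunctions

section DualNumbers

open PowerSeries DualNumber
open scoped PowerSeries.WithPiTopology

/-- The series of `ε`-parts of the coefficients of a series over the dual numbers. -/
noncomputable def epsPart (A : ℤ[ε]⟦X⟧) : ℤ⟦X⟧ := .mk fun n ↦ (A.coeff n).snd

/-- The series of standard (`ε`-free) parts of the coefficients of a series over the dual numbers. -/
noncomputable def stdPart (A : ℤ[ε]⟦X⟧) : ℤ⟦X⟧ := .mk fun n ↦ (A.coeff n).fst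

/-- The product rule: taking `ε`-parts is a derivation over taking standard parts. -/
lemma epsPart_mul (A B : ℤ[ε]⟦X⟧) :
    epsPart (A * B) = stdPart A * epsPart B + epsPart A * stdPart B := by
  ext n
  simp [epsPart, stdPart, coeff_mul, TrivSqZeroExt.snd_sum, Finset.sum_add_distrib]

lemma epsPart_expand (A : ℤ[ε]⟦X⟧) :
    epsPart (A.expand 2 two_ne_zero) = (epsPart A).expand 2 two_ne_zero := by
  ext n
  simp only [epsPart, coeff_mk, coeff_expand]
  split_ifs <;> simp

lemma one_add_smul_eps_pow (m : ℤ) (k : ℕ) :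
    (1 + m • ε : ℤ[ε]) ^ k = 1 + (k * m : ℤ) • ε := by
  induction k with
  | zero => simp
  | succ k ih =>
    rw [pow_succ, ih]
    ext <;> simp
    ring

lemma neg_one_add_smul_eps_pow (m : ℤ) (k : ℕ) :
    (-(1 + m • ε) : ℤ[ε]) ^ k = TrivSqZeroExt.inl ((-1) ^ k) * (1 + (k * m : ℤ) • ε) := by
  rw [neg_pow, one_add_smul_eps_pow, ← TrivSqZeroExt.inl_pow, TrivSqZeroExt.inl_neg,
    TrivSqZeroExt.inl_one]

/-- The generating function of `s`. -/
noncomputable def sSeries : ℤ⟦X⟧ := .mk s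

/-- Euler's theorem on partitions into odd and into distinct parts. -/
lemma stdPart_oddGF :
    stdPart (oddGF (1 + (1 : ℤ) • ε)) = stdPart (distinctGF (1 + (1 : ℤ) • ε)) := by
  ext n
  simp [stdPart, coeff_oddGF, coeff_distinctGF, TrivSqZeroExt.fst_sum,
    Nat.Partition.card_odds_eq_card_distincts, -one_smul]

lemma epsPart_oddGF : epsPart (oddGF (1 + (1 : ℤ) • ε)) = .mk fun n ↦ (oddPartsTotal n : ℤ) := by
  ext n
  simp [epsPart, coeff_oddGF, TrivSqZeroExt.snd_sum, oddPartsTotal, -one_smul]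

lemma epsPart_distinctGF :
    epsPart (distinctGF (1 + (1 : ℤ) • ε)) = .mk fun n ↦ (distinctPartsTotal n : ℤ) := by
  ext n
  simp [epsPart, coeff_distinctGF, TrivSqZeroExt.snd_sum, distinctPartsTotal, -one_smul]

/-- A partition into `k` distinct parts contributes `(-1)ᵏ k m`, and `s` weights it by
`(-1)ᵏ⁺¹ k`. -/
lemma epsPart_distinctGF_neg (m : ℤ) :
    epsPart (distinctGF (-(1 + m • ε))) = -(m • sSeries) := by
  ext n
  simp only [epsPart, coeff_distinctGF, neg_one_add_smul_eps_pow, TrivSqZeroExt.snd_sum, sSeries, s,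
    coeff_mk, map_neg, map_zsmul, smul_eq_mul, Finset.mul_sum, ← Finset.sum_neg_distrib]
  refine Finset.sum_congr rfl fun p _ ↦ ?_
  split_ifs with h
  · simp [h.neg_one_pow, mul_comm]
  · simp [(Nat.not_odd_iff_even.mp h).neg_one_pow, mul_comm]

lemma stdPart_distinctGF_neg :
    stdPart (distinctGF (-(1 + (1 : ℤ) • ε))) = pentagonalSeries ℤ := by
  have h : stdPart (distinctGF (-(1 + (1 : ℤ) • ε))) = distinctGF (-1) := by
    ext n
    simp [stdPart, coeff_distinctGF, TrivSqZeroExt.fst_sum, -one_smul]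
  rw [h]
  refine (hasProd_distinctGF (-1 : ℤ)).unique ?_
  simpa [sub_eq_add_neg] using WithPiTopology.hasProd_one_sub_X_pow ℤ

/-- The generating function form of the theorem, `(o - d) F = σ(X²)`. -/
lemma mk_b_mul_pentagonalSeries :
    (PowerSeries.mk fun n : ℕ ↦ b n) * pentagonalSeries ℤ = sSeries.expand 2 two_ne_zero := by
  have h₁ := congrArg epsPart (oddGF_mul_distinctGF (1 + (1 : ℤ) • ε : ℤ[ε]))
  have h₂ := congrArg epsPart (distinctGF_mul_distinctGF_neg (1 + (1 : ℤ) • ε : ℤ[ε]))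
  rw [epsPart_mul, epsPart_expand, stdPart_oddGF, epsPart_oddGF, epsPart_distinctGF_neg,
    stdPart_distinctGF_neg] at h₁
  rw [one_add_smul_eps_pow, epsPart_mul, epsPart_expand, epsPart_distinctGF, epsPart_distinctGF_neg,
    epsPart_distinctGF_neg, stdPart_distinctGF_neg] at h₂
  have hb : (PowerSeries.mk fun n : ℕ ↦ b n) =
      (PowerSeries.mk fun n ↦ (oddPartsTotal n : ℤ)) -
        PowerSeries.mk fun n ↦ (distinctPartsTotal n : ℤ) := by
    ext n
    simp [b]
  rw [hb]
  simp only [Nat.cast_ofNat, mul_one, one_zsmul, two_zsmul, map_neg, map_add] at h₁ h₂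
  linear_combination h₁ - h₂

/-- Coefficients of a product with the pentagonal series; the sum has finite support. -/
lemma coeff_mul_pentagonalSeries (A : ℤ⟦X⟧) (n : ℕ) :
    (A * pentagonalSeries ℤ).coeff n =
      ∑ᶠ k : ℤ, (-1 : ℤ) ^ k.natAbs *
        if pentagonal k ≤ n then A.coeff (n - pentagonal k) else 0 := by
  have h := ((WithPiTopology.hasSum_pentagonalSeries ℤ).mul_left A).map (coeff (R := ℤ) n)
    (WithPiTopology.continuous_coeff ℤ n)
  have hterm : (coeff (R := ℤ) n ∘
      fun k : ℤ ↦ A * (((Int.negOnePow k : ℤ) : ℤ⟦X⟧) * X ^ pentagonal k)) = fun k : ℤ ↦ (-1 : ℤ) ^ k.natAbs *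
        if pentagonal k ≤ n then A.coeff (n - pentagonal k) else 0 := by
    ext k
    have hk : ((Int.negOnePow k : ℤ) : ℤ⟦X⟧) = C ((-1 : ℤ) ^ k.natAbs) := by
      rcases Int.even_or_odd k with h | h
      · simp [Int.negOnePow_even k h, (Int.natAbs_even.mpr h).neg_one_pow]
      · simp [Int.negOnePow_odd k h, (Int.natAbs_odd.mpr h).neg_one_pow]
    rw [Function.comp_apply, hk, mul_left_comm, coeff_C_mul, coeff_mul_X_pow']
  rw [hterm] at h
  rw [← h.tsum_eq]
  refine tsum_eq_finsum (((Set.finite_Iic n).preimage pentagonal_injective.injOn).subset ?_)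
  intro k hk
  by_contra hlt
  exact hk (by simp [show ¬ pentagonal k ≤ n from hlt])

end DualNumbers

/-- Corollary 3: `∑_{k=-∞}^{∞} (-1)^k b(n - k(3k-1)/2)` equals `s(n/2)` for even `n` and
`0` for odd `n`. -/
theorem statement6 (n : ℕ) (hn : 1 ≤ n) :
    ∑ᶠ k : ℤ, (-1 : ℤ) ^ k.natAbs * b ((n : ℤ) - k * (3 * k - 1) / 2) =
      if Even n then s (n / 2) else 0 := by
  have h := congrArg (PowerSeries.coeff n) mk_b_mul_pentagonalSeries
  rw [coeff_mul_pentagonalSeries, PowerSeries.coeff_expand] at h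
  simp only [sSeries, PowerSeries.coeff_mk, ← even_iff_two_dvd] at h
  rw [← h]
  refine finsum_congr fun k ↦ ?_
  rw [← natCast_pentagonal]
  split_ifs with hk
  · rw [Nat.cast_sub hk]
  · rw [b, if_neg (by omega)]
end

section
/- For every integer n ≥ 1, b(n) = Σ_{j=1}^{⌊n/2⌋} s(j) · p(n−2j), where p is the partition function with p(0)=1. -/
/-!
Write `u` for a variable marking the number of parts, and let
`O(u) = ∏ (1 - u X ^ (2 i - 1))⁻¹`, `D(u) = ∏ (1 + u X ^ i)` and `T(u) = D(-u) = ∏ (1 - u X ^ i)`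
be the generating functions of partitions into odd parts, of partitions into distinct parts, and of
partitions into distinct parts with sign. Comparing factors,
`O(u) T(u) = ∏ (1 - u X ^ (2 i))` (`oddGen_mul_distinctGen`) and
`D(u) T(u) = ∏ (1 - u ^ 2 X ^ (2 i))` (`distinctGen_mul_neg`).

Now differentiate at `u = 1`, that is, put `u = 1 + ε` in the dual numbers `ℤ[ε]`, `ε ^ 2 = 0`.
By Euler's theorem `O(1) = D(1)`, so `O(u) - D(u) = ε ∑ b(n) X ^ n`, and only the constant part
`T(1)` matters in the product with `T(u)`. As `T(u) = T(1) - ε ∑ s(n) X ^ n` and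
`u ^ 2 = 1 + 2 ε`, the difference of the two right-hand sides is `ε ∑ s(n) X ^ (2 n)`. Hence
`(∑ b(n) X ^ n) T(1) = ∑ s(n) X ^ (2 n)` (`mk_b_mul_distinctGen`). The series `∑ p(n) X ^ n` is the
inverse of `T(1)`, and multiplying by it (`mk_b_eq`) and comparing coefficients gives the formula.
-/

open Nat Finset

/-! ### Generating functions by number of parts -/

section WeightedGenFun

open PowerSeries
open scoped PowerSeries.WithPiTopology

variable {R : Type*} [CommRing R]

/-- The series `∑ a ^ ℓ(p) X ^ |p|` over the partitions `p` into distinct parts, where `ℓ(p)` is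
the number of parts; equivalently `∏ (1 + a X ^ i)`. -/
noncomputable def distinctGen (a : R) : R⟦X⟧ :=
  PowerSeries.mk fun n ↦ ∑ p ∈ Nat.Partition.distincts n, a ^ Multiset.card p.parts

/-- The series `∑ a ^ ℓ(p) X ^ |p|` over the partitions `p` all of whose parts satisfy `P`;
equivalently `∏ (1 - a X ^ i)⁻¹` over the `i` satisfying `P`. -/
noncomputable def restrictedGen (P : ℕ → Prop) [DecidablePred P] (a : R) : R⟦X⟧ :=
  PowerSeries.mk fun n ↦ ∑ p ∈ Nat.Partition.restricted n P, a ^ Multiset.card p.parts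

section Products

variable [TopologicalSpace R] [T2Space R]

theorem hasProd_distinctGen (a : R) :
    HasProd (fun i ↦ 1 + C a * X ^ (i + 1)) (distinctGen a) := by
  convert! Nat.Partition.hasProd_genFun (fun _ c ↦ if c < 2 then a ^ c else 0) using 1
  · ext1 i
    rw [tsum_eq_single 0]
    · simp [smul_eq_C_mul]
    · intro j hj
      rw [if_neg (by omega), zero_smul]
  · ext n
    simp_rw [distinctGen, ← Nat.Partition.countRestricted_two, Nat.Partition.countRestricted,
      Nat.Partition.genFun, coeff_mk, Finset.sum_filter]
    refine Finset.sum_congr rfl fun p _ ↦ ?_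
    simp_rw [Finsupp.prod, Finset.prod_ite_zero]
    simp [Finset.prod_pow_eq_pow_sum]

theorem hasProd_restrictedGen [IsTopologicalRing R] (P : ℕ → Prop) [DecidablePred P] (a : R) :
    HasProd (fun i ↦ if P (i + 1) then ∑' j : ℕ, (C a * X ^ (i + 1)) ^ j else 1)
      (restrictedGen P a) := by
  convert! Nat.Partition.hasProd_genFun (fun i c ↦ if P i then a ^ c else 0) using 1
  · ext1 i
    split_ifs
    · have hs : Summable fun j : ℕ ↦ (C a * X ^ (i + 1) : R⟦X⟧) ^ j :=
        WithPiTopology.summable_pow_of_constantCoeff_eq_zero (by simp)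
      rw [tsum_eq_zero_add' ((summable_nat_add_iff 1).mpr hs)]
      simp only [pow_zero, smul_eq_C_mul, mul_pow, map_pow, pow_mul]
    · simp
  · ext n
    simp_rw [restrictedGen, Nat.Partition.restricted,
      Nat.Partition.genFun, coeff_mk, Finset.sum_filter]
    refine Finset.sum_congr rfl fun p _ ↦ ?_
    simp_rw [Finsupp.prod, Finset.prod_ite_zero]
    simp [Finset.prod_pow_eq_pow_sum]

omit [T2Space R] in
theorem continuous_expand_two :
    Continuous (expand 2 two_ne_zero : R⟦X⟧ →ₐ[R] R⟦X⟧) := by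
  rw [continuous_iff_continuousAt]
  intro f
  rw [ContinuousAt, WithPiTopology.tendsto_iff_coeff_tendsto]
  intro d
  simp_rw [coeff_expand]
  split_ifs
  · exact (WithPiTopology.continuous_coeff R _).continuousAt
  · exact tendsto_const_nhds

theorem hasProd_expand_distinctGen (a : R) :
    HasProd (fun i ↦ 1 + C a * X ^ (2 * (i + 1))) (expand 2 two_ne_zero (distinctGen a)) := by
  convert! (hasProd_distinctGen a).map (expand 2 two_ne_zero) continuous_expand_two using 1
  ext1 i
  simp [pow_mul, expand_C]

/-- A factor of `restrictedGen` cancels the matching factor of `distinctGen (-a)`. -/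
theorem geom_mul (a : R) [IsTopologicalRing R] (k : ℕ) :
    (∑' j : ℕ, (C a * X ^ (k + 1)) ^ j) * (1 + C (-a) * X ^ (k + 1)) = 1 := by
  have := WithPiTopology.tsum_pow_mul_one_sub_of_constantCoeff_eq_zero
    (f := C a * X ^ (k + 1)) (by simp)
  simpa [sub_eq_add_neg] using this

end Products

-- The three identities below do not mention a topology: the discrete one serves for the products.

/-- `∏ (1 + a X ^ i) * ∏ (1 - a X ^ i) = ∏ (1 - a ^ 2 X ^ (2 i))`. -/
theorem distinctGen_mul_neg (a : R) :
    distinctGen a * distinctGen (-a) = expand 2 two_ne_zero (distinctGen (-a ^ 2)) := by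
  let _ : TopologicalSpace R := ⊥
  have _ : DiscreteTopology R := ⟨rfl⟩
  refine ((hasProd_distinctGen a).mul (hasProd_distinctGen (-a))).unique ?_
  convert! hasProd_expand_distinctGen (-a ^ 2) using 1
  ext1 i
  simp only [map_neg, map_pow]
  ring

/-- `∏ (1 - a X ^ i)⁻¹` over odd `i`, times `∏ (1 - a X ^ i)` over all `i`, is the product of
`1 - a X ^ i` over even `i`. -/
theorem oddGen_mul_distinctGen (a : R) :
    restrictedGen (¬ Even ·) a * distinctGen (-a) =
      expand 2 two_ne_zero (distinctGen (-a)) := by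
  let _ : TopologicalSpace R := ⊥
  have _ : DiscreteTopology R := ⟨rfl⟩
  have h := (hasProd_restrictedGen (¬ Even ·) a).mul (hasProd_distinctGen (-a))
  -- Only the factors with `i + 1 = 2 (j + 1)`, that is `i = 2 j + 1`, differ from `1`.
  have hinj : Function.Injective (fun j : ℕ ↦ 2 * j + 1) := fun x y hxy ↦ by
    simp only at hxy; omega
  rw [← hinj.hasProd_iff] at h
  · refine h.unique ?_
    convert! hasProd_expand_distinctGen (-a) using 1
    ext1 j
    have : Even (2 * j + 1 + 1) := ⟨j + 1, by ring⟩
    simp only [Function.comp_apply, not_not.mpr this, if_false, one_mul]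
    ring
  · intro i hi
    have : ¬ Even (i + 1) := fun ⟨r, hr⟩ ↦ hi ⟨r - 1, by simp only; omega⟩
    rw [if_pos this, geom_mul]

/-- `∏ (1 - a X ^ i)⁻¹ * ∏ (1 - a X ^ i) = 1`. -/
theorem allGen_mul_distinctGen (a : R) :
    restrictedGen (fun _ ↦ True) a * distinctGen (-a) = 1 := by
  let _ : TopologicalSpace R := ⊥
  have _ : DiscreteTopology R := ⟨rfl⟩
  refine ((hasProd_restrictedGen (fun _ ↦ True) a).mul (hasProd_distinctGen (-a))).unique ?_
  simp_rw [if_true, geom_mul]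
  exact hasProd_one

end WeightedGenFun

/-! ### Differentiation at `u = 1`: coefficients in the dual numbers -/

section DualNumbers

open PowerSeries DualNumber TrivSqZeroExt

theorem fst_one_add_eps_pow (k : ℕ) : fst ((1 + ε : ℤ[ε]) ^ k) = 1 := by
  simp

theorem snd_one_add_eps_pow (k : ℕ) : snd ((1 + ε : ℤ[ε]) ^ k) = k := by
  simp

theorem fst_neg_one_add_eps_pow (k : ℕ) : fst ((-(1 + ε) : ℤ[ε]) ^ k) = (-1) ^ k := by
  simp

theorem snd_neg_one_add_eps_pow (k : ℕ) :
    snd ((-(1 + ε) : ℤ[ε]) ^ k) = -(if Odd k then (k : ℤ) else -k) := by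
  split_ifs with h
  · rw [h.neg_pow, snd_neg, snd_one_add_eps_pow]
  · rw [(Nat.not_odd_iff_even.mp h).neg_pow, snd_one_add_eps_pow, neg_neg]

/-- Differentiating `(-u) ^ k` at `u = 1` weights a partition into `k` distinct parts by `k`, with
the sign opposite to that in the definition of `s`. -/
theorem snd_coeff_distinctGen_neg (n : ℕ) :
    snd (coeff n (distinctGen (-(1 + ε) : ℤ[ε]))) = -s n := by
  simp only [distinctGen, coeff_mk, snd_sum, snd_neg_one_add_eps_pow, s, Finset.sum_neg_distrib]

theorem fst_coeff_distinctGen_neg (n : ℕ) :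
    fst (coeff n (distinctGen (-(1 + ε) : ℤ[ε]))) = coeff n (distinctGen (-1 : ℤ)) := by
  simp only [distinctGen, coeff_mk, fst_sum, fst_neg_one_add_eps_pow]

theorem snd_coeff_oddGen_sub_distinctGen (n : ℕ) :
    snd (coeff n (restrictedGen (¬ Even ·) (1 + ε : ℤ[ε]) - distinctGen (1 + ε))) = b n := by
  simp only [map_sub, snd_sub, restrictedGen, distinctGen, coeff_mk, snd_sum,
    snd_one_add_eps_pow, b, oddPartsTotal, distinctPartsTotal, Nat.Partition.odds]
  simp

/-- The first component is the difference between the numbers of odd and of distinct partitions,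
which vanishes by Euler's theorem. -/
theorem fst_coeff_oddGen_sub_distinctGen (n : ℕ) :
    fst (coeff n (restrictedGen (¬ Even ·) (1 + ε : ℤ[ε]) - distinctGen (1 + ε))) = 0 := by
  have h := Nat.Partition.card_odds_eq_card_distincts n
  rw [Nat.Partition.odds] at h
  simp only [map_sub, fst_sub, restrictedGen, distinctGen, coeff_mk, fst_sum,
    fst_one_add_eps_pow, Finset.sum_const, h, sub_self]

/-- `-(1 + ε) ^ 2 = -(1 + 2 ε)`, so squaring doubles the derivative. -/
theorem coeff_distinctGen_neg_sq (n : ℕ) :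
    coeff n (distinctGen (-(1 + ε) ^ 2 : ℤ[ε])) =
      coeff n (distinctGen (-(1 + ε) : ℤ[ε])) - inr (s n) := by
  have h (k : ℕ) : (-(1 + ε) ^ 2 : ℤ[ε]) ^ k =
      (-(1 + ε)) ^ k - inr (if Odd k then (k : ℤ) else -k) := by
    have h1 : (-(1 + ε) ^ 2 : ℤ[ε]) ^ k = (-(1 + ε)) ^ k * (1 + ε) ^ k := by
      rw [← mul_pow]; ring
    rw [h1]
    ext
    · rw [fst_mul, fst_sub, fst_inr, fst_one_add_eps_pow, mul_one, sub_zero]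
    · rw [DualNumber.snd_mul, snd_sub, snd_inr, snd_neg_one_add_eps_pow,
        fst_neg_one_add_eps_pow, fst_one_add_eps_pow, snd_one_add_eps_pow]
      split_ifs with hk
      · rw [hk.neg_one_pow]; ring
      · rw [(Nat.not_odd_iff_even.mp hk).neg_one_pow]; ring
  simp only [distinctGen, coeff_mk, h, Finset.sum_sub_distrib, s, inr_sum]

/-- The product of `∑ b(n) X ^ n` and `∏ (1 - X ^ i)` is `∑ s(n) X ^ (2 n)`. -/
theorem mk_b_mul_distinctGen :
    PowerSeries.mk (fun n : ℕ ↦ b n) * distinctGen (-1 : ℤ) =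
      expand 2 two_ne_zero (PowerSeries.mk s) := by
  have key : (restrictedGen (¬ Even ·) (1 + ε : ℤ[ε]) - distinctGen (1 + ε)) *
      distinctGen (-(1 + ε)) = expand 2 two_ne_zero (distinctGen (-(1 + ε))) -
        expand 2 two_ne_zero (distinctGen (-(1 + ε) ^ 2)) := by
    rw [sub_mul, oddGen_mul_distinctGen, distinctGen_mul_neg]
  ext n
  have h := congrArg (fun f ↦ snd (coeff n f)) key
  simp only [coeff_mul, snd_sum, DualNumber.snd_mul, fst_coeff_oddGen_sub_distinctGen,
    snd_coeff_oddGen_sub_distinctGen, fst_coeff_distinctGen_neg, zero_mul, zero_add] at h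
  simp only [coeff_mul, coeff_mk, h]
  rw [map_sub, coeff_expand, coeff_expand, coeff_expand]
  split_ifs
  · simp [coeff_distinctGen_neg_sq]
  · simp

/-- The product of `∑ s(n) X ^ (2 n)` and `∑ p(n) X ^ n` is `∑ b(n) X ^ n`. -/
theorem mk_b_eq :
    PowerSeries.mk (fun n : ℕ ↦ b n) =
      expand 2 two_ne_zero (PowerSeries.mk s) * PowerSeries.mk (fun n ↦ (pN n : ℤ)) := by
  have hp : PowerSeries.mk (fun n ↦ (pN n : ℤ)) = restrictedGen (fun _ ↦ True) (1 : ℤ) := by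
    ext n
    simp [restrictedGen, Nat.Partition.restricted, pN]
  rw [← mk_b_mul_distinctGen, hp, mul_assoc, mul_comm (distinctGen _), allGen_mul_distinctGen,
    mul_one]

theorem s_zero : s 0 = 0 := by
  simp [s]

end DualNumbers

/-- Corollary 3a: `b(n) = ∑_{j=1}^{⌊n/2⌋} s(j) p(n-2j)`. -/
theorem statement7 (n : ℕ) (hn : 1 ≤ n) :
    b n = ∑ j ∈ Finset.Icc 1 (n / 2), s j * (pN (n - 2 * j) : ℤ) := by
  have h := congrArg (PowerSeries.coeff n) mk_b_eq
  rw [PowerSeries.coeff_mk, PowerSeries.coeff_mul,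
    Finset.Nat.sum_antidiagonal_eq_sum_range_succ_mk] at h
  rw [h]
  symm
  -- Only the even indices `i = 2 j` with `j ≥ 1` contribute, as `s 0 = 0`.
  refine Finset.sum_of_injOn (fun j ↦ 2 * j) (fun x _ y _ hxy ↦ ?_) (fun j hj ↦ ?_)
    (fun i hi hi' ↦ ?_) (fun j _ ↦ ?_)
  · simp only at hxy; omega
  · simp only [Finset.coe_Icc, Set.mem_Icc] at hj
    simp only [Finset.coe_range, Set.mem_Iio]
    omega
  · rw [PowerSeries.coeff_expand]
    split_ifs with hd
    · obtain ⟨j, rfl⟩ := hd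
      rcases Nat.eq_zero_or_pos j with rfl | hj
      · simp [s_zero]
      · refine absurd ⟨j, ?_, rfl⟩ hi'
        simp only [Finset.mem_range] at hi
        simp only [Finset.coe_Icc, Set.mem_Icc]
        omega
    · rw [zero_mul]
  · rw [PowerSeries.coeff_expand_mul, PowerSeries.coeff_mk, PowerSeries.coeff_mk]
end

section
/- For every positive integer n, S(n), the total number of parts in all partitions of n, equals Σ_{j=1}^{n} d(j) · p(n−j), where d(j) is the number of divisors of j and p is the partition function with p(0)=1. -/
/-!
Both sides count pairs `(a, m)` of positive integers together with a partition of `n` in which `a`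
occurs at least `m` times. Summing over `a` and `m` for a fixed partition gives its number of
parts. For a fixed pair, deleting `m` copies of `a` is a bijection onto the partitions of
`n - a * m` (`card_le_count`), and the pairs with product `j` are the `d(j)` factorisations of `j`.
-/


open Nat Finset

/-- The number of parts of a partition, counted as the number of pairs `(a, m)` with `1 ≤ m` such
that `a` occurs at least `m` times. -/
lemma card_parts_eq_sum_s8 {n : ℕ} (p : Nat.Partition n) :
    Multiset.card p.parts =
      ∑ x ∈ Icc 1 n ×ˢ Icc 1 n, if x.2 ≤ p.parts.count x.1 then 1 else 0 := by
  have hsub : ∀ a ∈ p.parts, a ∈ Icc 1 n := fun a ha =>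
    mem_Icc.2 ⟨p.parts_pos ha, Nat.Partition.le_of_mem_parts ha⟩
  rw [← Multiset.sum_count_eq_card hsub, sum_product]
  refine sum_congr rfl fun a ha => ?_
  -- Multiplicities are at most `n`, so truncating the range of `m` at `n` loses nothing.
  have hc : p.parts.count a ≤ n := by
    have h := Multiset.le_count_iff_replicate_le.1 (le_refl (p.parts.count a))
    obtain ⟨t, ht⟩ := Multiset.le_iff_exists_add.1 h
    have hs := congrArg Multiset.sum ht
    rw [p.parts_sum, Multiset.sum_add, Multiset.sum_replicate, smul_eq_mul] at hs
    have := Nat.le_mul_of_pos_right (p.parts.count a) (mem_Icc.1 ha).1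
    omega
  rw [← card_filter]
  have : (Icc 1 n).filter (fun m => m ≤ p.parts.count a) = Icc 1 (p.parts.count a) := by
    ext m
    simp only [mem_filter, mem_Icc]
    omega
  simp [this]

/-- Deleting `m` copies of `a` is a bijection from the partitions of `n` in which `a` occurs at
least `m` times to the partitions of `n - a * m`; there are none of the former if `n < a * m`. -/
lemma card_le_count {n a m : ℕ} (ha : 1 ≤ a) :
    #{p : Nat.Partition n | m ≤ p.parts.count a} = if a * m ≤ n then pN (n - a * m) else 0 := by
  have key : ∀ p : Nat.Partition n, m ≤ p.parts.count a →
      ∃ t, p.parts = Multiset.replicate m a + t ∧ a * m + t.sum = n := by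
    intro p hp
    obtain ⟨t, ht⟩ := Multiset.le_iff_exists_add.1 (Multiset.le_count_iff_replicate_le.1 hp)
    have hs := congrArg Multiset.sum ht
    rw [p.parts_sum, Multiset.sum_add, Multiset.sum_replicate, smul_eq_mul, mul_comm] at hs
    exact ⟨t, ht, hs.symm⟩
  split_ifs with h
  · rw [pN, ← Finset.card_univ]
    symm
    refine card_bij (fun q _ => ⟨Multiset.replicate m a + q.parts, ?_, ?_⟩) ?_ ?_ ?_
    · intro i hi
      rcases Multiset.mem_add.1 hi with hi | hi
      · rw [Multiset.eq_of_mem_replicate hi]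
        exact ha
      · exact q.parts_pos hi
    · rw [Multiset.sum_add, Multiset.sum_replicate, q.parts_sum, smul_eq_mul, mul_comm]
      omega
    · intro q _
      simp
    · intro q _ q' _ hq
      exact Nat.Partition.ext (add_left_cancel (congrArg Nat.Partition.parts hq))
    · intro p hp
      obtain ⟨t, ht, hs⟩ := key p (mem_filter.1 hp).2
      refine ⟨⟨t, fun hi => p.parts_pos (ht ▸ Multiset.mem_add.2 (Or.inr hi)), by omega⟩,
        mem_univ _, ?_⟩
      exact Nat.Partition.ext ht.symm
  · rw [Finset.card_eq_zero, filter_eq_empty_iff]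
    intro p _ hp
    obtain ⟨t, -, hs⟩ := key p hp
    omega

/-- `S(n) = ∑_{j=1}^{n} d(j) p(n-j)` where `d j` is the number of divisors of `j`. -/
theorem statement8 (n : ℕ) (hn : 0 < n) :
    SN n = ∑ j ∈ Finset.Icc 1 n, j.divisors.card * pN (n - j) := by
  have h1 : SN n = ∑ x ∈ Icc 1 n ×ˢ Icc 1 n,
      if x.1 * x.2 ≤ n then pN (n - x.1 * x.2) else 0 := by
    rw [SN, sum_congr rfl fun p _ => card_parts_eq_sum_s8 p, sum_comm]
    refine sum_congr rfl fun x hx => ?_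
    rw [← card_filter, card_le_count (mem_Icc.1 (mem_product.1 hx).1).1]
  rw [h1, ← sum_filter, ← sum_fiberwise_of_maps_to (t := Icc 1 n) (g := fun x => x.1 * x.2)]
  · refine sum_congr rfl fun j hj => ?_
    have hj' := mem_Icc.1 hj
    have hfib : ((Icc 1 n ×ˢ Icc 1 n).filter (fun x => x.1 * x.2 ≤ n)).filter
        (fun x => x.1 * x.2 = j) = j.divisorsAntidiagonal := by
      ext ⟨a, m⟩
      simp only [mem_filter, mem_product, mem_Icc, Nat.mem_divisorsAntidiagonal]
      constructor
      · rintro ⟨-, h⟩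
        exact ⟨h, by omega⟩
      · rintro ⟨h, -⟩
        have ha : 0 < a := Nat.pos_of_ne_zero (by rintro rfl; omega)
        have hm : 0 < m := Nat.pos_of_ne_zero (by rintro rfl; omega)
        have := Nat.le_mul_of_pos_right a hm
        have := Nat.le_mul_of_pos_left m ha
        omega
    rw [sum_congr rfl fun x hx => by rw [(mem_filter.1 hx).2], hfib, sum_const, smul_eq_mul,
      ← Nat.map_div_right_divisors, card_map]
  · intro x hx
    simp only [mem_filter, mem_product, mem_Icc] at hx ⊢
    exact ⟨Nat.mul_pos hx.1.1.1 hx.1.2.1, hx.2⟩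
end

section
/- For every integer n ≥ 1, b(n) = Σ_{k=0}^{∞} S((2n − k(k+1))/4), where a summand is S((2n − k(k+1))/4) if 4 divides 2n − k(k+1) and (2n − k(k+1))/4 is a positive integer, and 0 otherwise (the sum is finite). -/
/-!
Write `O` and `E` for the generating functions of the partitions into odd parts and into even parts.

Counting the occurrences of each part size `m` separately turns a total number of parts into a
product. Deleting one copy of `m` shows that the occurrences of an allowed size `m` in partitions
with restricted parts are counted by the partition series times `q^m / (1 - q^m)`, and in partitions
into distinct parts by the partition series times `q^m / (1 + q^m)` (`occSeries_eq`). By Euler's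
theorem the partition series is `O` both for odd parts and for distinct parts, so
`∑ b(n) q^n = O · (∑_{m odd} q^m / (1 - q^m) - ∑_m q^m / (1 + q^m))`. Comparing coefficients through
the divisors of each exponent, the bracket equals `∑_{m even} q^m / (1 - q^m)` (`sum_lambert`), and
`E` times that series counts the parts in all partitions into even parts.

It remains to replace `O` by `E`, which is Gauss's identity `O = E · ∑_{k ≥ 0} q^(k(k+1)/2)`
(`restrictedSeries_odd`). It is the limit of Shanks's finite identity
`∑_{s < 2n} q^(s(s+1)/2) = ∑_{s < n} (P_n / P_s) q^(s(2n+1))`, where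
`P_n = ∏_{i ≤ n} (1 - q^(2i)) / (1 - q^(2i-1))`; that identity follows by induction on `n` from a
telescoping sum (`shanks`). Hence `∑ b(n) q^n` is `∑ q^(k(k+1)/2)` times the series counting parts in
partitions into even parts (`partsSeries_sub`); halving the parts, the coefficient of `q^(2m)` in the
latter is `S(m)`, and comparing coefficients of `q^n` gives the theorem.
-/

open Nat Finset

namespace PartsCount

open PowerSeries PowerSeries.WithPiTopology Filter Topology

/-! ### Gauss's identity for triangular numbers -/

/-- The polynomial `∏_{s ≤ i < n} (1 - q^(2i+2)) · ∏_{i < s} (1 - q^(2i+1))`, the cofactor of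
`q^(s(2n+1))` in the finite form of Gauss's identity once denominators are cleared. -/
noncomputable def shanksTerm (n s : ℕ) : ℤ⟦X⟧ :=
  (∏ i ∈ Finset.Ico s n, (1 - X ^ (2 * i + 2))) * ∏ i ∈ range s, (1 - X ^ (2 * i + 1))

lemma shanksTerm_succ_left {n s : ℕ} (h : s ≤ n) :
    shanksTerm (n + 1) s = shanksTerm n s * (1 - X ^ (2 * n + 2)) := by
  rw [shanksTerm, shanksTerm, Finset.prod_Ico_succ_top h]
  ring

lemma shanksTerm_succ_right {n s : ℕ} (h : s < n) :
    shanksTerm n (s + 1) * (1 - X ^ (2 * s + 2)) = shanksTerm n s * (1 - X ^ (2 * s + 1)) := by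
  rw [shanksTerm, shanksTerm, Finset.prod_range_succ, Finset.prod_eq_prod_Ico_succ_bot h]
  ring

lemma shanksTerm_self (n : ℕ) : shanksTerm n n = ∏ i ∈ range n, (1 - X ^ (2 * i + 1)) := by
  simp [shanksTerm]

/-- The telescoping behind Shanks's identity: the summands for `n + 1` and for `n` differ by a
difference of consecutive values of `q^(s(2n+1)) (1 - q^(2s)) · shanksTerm n s`. -/
lemma sum_shanksTerm_sub (n m : ℕ) (hm : m ≤ n) :
    ∑ s ∈ range m, (X ^ (s * (2 * n + 3)) * shanksTerm (n + 1) s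
      - (1 - X ^ (2 * n + 1)) * (X ^ (s * (2 * n + 1)) * shanksTerm n s))
    = X ^ (m * (2 * n + 1)) * shanksTerm n m * (1 - X ^ (2 * m)) := by
  induction m with
  | zero => simp
  | succ m ih =>
    rw [Finset.sum_range_succ, ih (by omega), shanksTerm_succ_left (by omega)]
    have h := shanksTerm_succ_right (n := n) (s := m) (by omega)
    rw [show 2 * (m + 1) = 2 * m + 2 by ring, mul_assoc (X ^ ((m + 1) * (2 * n + 1))), h]
    ring

/-- Shanks's finite form of Gauss's identity, with denominators cleared. -/
lemma shanks (n : ℕ) :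
    (∏ i ∈ range n, (1 - X ^ (2 * i + 1))) * ∑ s ∈ range (2 * n), (X : ℤ⟦X⟧) ^ (s * (s + 1) / 2)
    = ∑ s ∈ range n, X ^ (s * (2 * n + 1)) * shanksTerm n s := by
  induction n with
  | zero => simp
  | succ n ih =>
    have h := sum_shanksTerm_sub n n le_rfl
    rw [Finset.sum_sub_distrib, ← Finset.mul_sum, ← ih, shanksTerm_self] at h
    have h1 : 2 * n * (2 * n + 1) / 2 = n * (2 * n + 1) :=
      Nat.div_eq_of_eq_mul_left two_pos (by ring)
    have h2 : (2 * n + 1) * (2 * n + 1 + 1) / 2 = (n + 1) * (2 * n + 1) :=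
      Nat.div_eq_of_eq_mul_left two_pos (by ring)
    rw [show 2 * (n + 1) = 2 * n + 1 + 1 by ring, Finset.sum_range_succ, Finset.sum_range_succ,
      Finset.prod_range_succ, Finset.sum_range_succ, shanksTerm_succ_left le_rfl,
      shanksTerm_self, h1, h2]
    rw [sub_eq_iff_eq_add] at h
    rw [show 2 * n + 1 + 1 + 1 = 2 * n + 3 by ring, h]
    ring

/-- Gauss's series `∑_{k ≥ 0} q^(k(k+1)/2)`. -/
noncomputable def triangularSeries : ℤ⟦X⟧ :=
  PowerSeries.mk fun n ↦ ∑ k ∈ range (n + 1), if n = k * (k + 1) / 2 then 1 else 0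

lemma le_triangular (k : ℕ) : k ≤ k * (k + 1) / 2 := by
  rw [Nat.le_div_iff_mul_le two_pos]
  rcases k with _ | k
  · simp
  · nlinarith

lemma coeff_triangularSeries {n N : ℕ} (h : n < N) :
    coeff n triangularSeries = coeff n (∑ k ∈ range N, (X : ℤ⟦X⟧) ^ (k * (k + 1) / 2)) := by
  rw [triangularSeries, coeff_mk, map_sum]
  simp_rw [coeff_X_pow]
  apply Finset.sum_subset (Finset.range_subset_range.mpr h)
  intro k _ hk
  have := le_triangular k
  rw [if_neg]
  rw [Finset.mem_range] at hk
  omega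

/-- The `i`-th factor of the product `∏ (1 - q^(i+1))` over the positive integers satisfying `p`. -/
noncomputable def factor (p : ℕ → Prop) [DecidablePred p] (i : ℕ) : ℤ⟦X⟧ :=
  if p (i + 1) then 1 - X ^ (i + 1) else 1

/-- The generating function of the number of partitions all of whose parts satisfy `p`. -/
noncomputable def restrictedSeries (p : ℕ → Prop) [DecidablePred p] : ℤ⟦X⟧ :=
  PowerSeries.mk fun n ↦ (#(Nat.Partition.restricted n p) : ℤ)

lemma prod_factor_odd (n : ℕ) :
    ∏ i ∈ range (2 * n), factor (¬ Even ·) i = ∏ i ∈ range n, (1 - X ^ (2 * i + 1)) := by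
  induction n with
  | zero => simp
  | succ n ih =>
    rw [show 2 * (n + 1) = 2 * n + 1 + 1 by ring, Finset.prod_range_succ, Finset.prod_range_succ,
      Finset.prod_range_succ, ih]
    simp [factor, parity_simps]

lemma prod_factor_even (n : ℕ) :
    ∏ i ∈ range (2 * n), factor (Even ·) i = ∏ i ∈ range n, (1 - X ^ (2 * i + 2)) := by
  induction n with
  | zero => simp
  | succ n ih =>
    rw [show 2 * (n + 1) = 2 * n + 1 + 1 by ring, Finset.prod_range_succ, Finset.prod_range_succ,
      Finset.prod_range_succ, ih]
    simp [factor, parity_simps]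

section

variable [TopologicalSpace ℤ]

lemma multipliable_factor (p : ℕ → Prop) [DecidablePred p] : Multipliable (factor p) := by
  have h : factor p = fun i ↦ 1 + (if p (i + 1) then -(X : ℤ⟦X⟧) ^ (i + 1) else 0) := by
    ext1 i
    unfold factor
    split_ifs <;> ring
  rw [h]
  apply multipliable_one_add_of_tendsto_order_atTop_nhds_top
  refine ENat.tendsto_nhds_top_iff_natCast_lt.mpr fun n ↦ eventually_atTop.mpr ⟨n, fun m hm ↦ ?_⟩
  split_ifs
  · rw [order_neg, order_X_pow]
    norm_cast
    omega
  · simp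

variable [DiscreteTopology ℤ]

lemma restrictedSeries_mul_tprod (p : ℕ → Prop) [DecidablePred p] :
    restrictedSeries p * ∏' i, factor p i = 1 := by
  have h := Nat.Partition.hasProd_powerSeriesMk_card_restricted ℤ p
  rw [restrictedSeries, ← h.tprod_eq, ← h.multipliable.tprod_mul (multipliable_factor p)]
  convert tprod_one with i
  unfold factor
  split_ifs
  · simp_rw [pow_mul]
    exact tsum_pow_mul_one_sub_of_constantCoeff_eq_zero (by simp)
  · simp

/-- **Gauss's identity** `∏ (1 - q^(2i-1)) · ∑ q^(k(k+1)/2) = ∏ (1 - q^(2i))`. In the finite form,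
every summand with `s > 0` is divisible by `q^(2n+1)` and disappears in the limit. -/
lemma gauss :
    (∏' i, factor (¬ Even ·) i) * triangularSeries = ∏' i, factor (Even ·) i := by
  have h2 : Tendsto (fun n : ℕ ↦ 2 * n) atTop atTop :=
    tendsto_atTop_mono (fun n ↦ by simp; omega) tendsto_id
  have hodd := (multipliable_factor (¬ Even ·)).hasProd.tendsto_prod_nat.comp h2
  have heven := (multipliable_factor (Even ·)).hasProd.tendsto_prod_nat.comp h2
  have htri : Tendsto (fun n ↦ ∑ k ∈ range (2 * n), (X : ℤ⟦X⟧) ^ (k * (k + 1) / 2)) atTop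
      (𝓝 triangularSeries) := by
    rw [tendsto_iff_coeff_tendsto]
    refine fun d ↦ tendsto_atTop_of_eventually_const (i₀ := d + 1) fun n hn ↦ ?_
    exact (coeff_triangularSeries (by omega)).symm
  have hlim := hodd.mul htri
  refine tendsto_nhds_unique hlim ?_
  rw [tendsto_iff_coeff_tendsto] at heven ⊢
  intro d
  refine (heven d).congr' (eventually_atTop.mpr ⟨d + 1, fun n hn ↦ ?_⟩)
  obtain ⟨n, rfl⟩ : ∃ m, n = m + 1 := ⟨n - 1, by omega⟩
  simp only [Function.comp_apply]
  rw [prod_factor_odd, prod_factor_even, shanks, Finset.sum_range_succ', map_add, map_sum,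
    Finset.sum_eq_zero]
  · simp [shanksTerm]
  · intro s _
    rw [coeff_X_pow_mul', if_neg]
    nlinarith

end

/-- Gauss's identity in terms of partitions. -/
lemma restrictedSeries_odd :
    restrictedSeries (¬ Even ·) = triangularSeries * restrictedSeries (Even ·) := by
  let : TopologicalSpace ℤ := ⊥
  have : DiscreteTopology ℤ := ⟨rfl⟩
  linear_combination -(restrictedSeries (¬ Even ·) * restrictedSeries (Even ·)) * gauss
    + triangularSeries * restrictedSeries (Even ·) * restrictedSeries_mul_tprod (¬ Even ·)
    - restrictedSeries (¬ Even ·) * restrictedSeries_mul_tprod (Even ·)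

/-! ### Counting parts one size at a time -/

/-- Deleting one copy of `m` identifies the partitions of `n` containing `m` with the
partitions of `n - m`. -/
lemma sum_partition_remove (f : Multiset ℕ → ℤ) {m : ℕ} (hm : 1 ≤ m) (n : ℕ)
    (hf : ∀ t, m ∉ t → f t = 0) :
    ∑ p : Nat.Partition n, f p.parts =
      if m ≤ n then ∑ p : Nat.Partition (n - m), f (m ::ₘ p.parts) else 0 := by
  split_ifs with h
  · have h1 := (Nat.Partition.partitionWithPartEquiv hm h).symm.sum_comp (fun p ↦ f p.1.parts)
    simp only [Nat.Partition.partitionWithPartEquiv_symm_apply_parts] at h1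
    rw [h1, ← Finset.sum_filter_of_ne (p := fun p : Nat.Partition n ↦ m ∈ p.parts)]
    · exact (Finset.sum_subtype _ (by simp) (fun p : Nat.Partition n ↦ f p.parts))
    · intro p _ hp
      by_contra hmem
      exact hp (hf _ hmem)
  · exact Finset.sum_eq_zero fun p _ ↦ hf _ fun hp ↦ h (Nat.Partition.le_of_mem_parts hp)

section

variable (A : Multiset ℕ → Prop) [DecidablePred A]

/-- The generating function of the number of partitions satisfying `A`. -/
noncomputable def countSeries : ℤ⟦X⟧ :=
  PowerSeries.mk fun n ↦ ∑ p : Nat.Partition n, if A p.parts then 1 else 0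

/-- The generating function of the number of occurrences of `m` in all partitions satisfying `A`. -/
noncomputable def occSeries (m : ℕ) : ℤ⟦X⟧ :=
  PowerSeries.mk fun n ↦ ∑ p : Nat.Partition n, if A p.parts then (p.parts.count m : ℤ) else 0

/-- The generating function of the number of parts in all partitions satisfying `A`. -/
noncomputable def partsSeries : ℤ⟦X⟧ :=
  PowerSeries.mk fun n ↦ ∑ p : Nat.Partition n,
    if A p.parts then (Multiset.card p.parts : ℤ) else 0

/-- The Lambert term `q^m / (1 - c q^m) = ∑_{j ≥ 1} c^(j-1) q^(mj)`. -/
noncomputable def lambert (c : ℤ) (m : ℕ) : ℤ⟦X⟧ :=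
  PowerSeries.mk fun N ↦ if N ≠ 0 ∧ m ∣ N then c ^ (N / m - 1) else 0

lemma lambert_mul (c : ℤ) {m : ℕ} (hm : 1 ≤ m) : lambert c m * (1 - C c * X ^ m) = X ^ m := by
  have h : lambert c m = X ^ m * (1 + C c * lambert c m) := by
    ext N
    rw [coeff_X_pow_mul', map_add, coeff_C_mul, lambert, coeff_mk]
    split_ifs with h1 h2 h2
    · obtain ⟨h0, j, rfl⟩ := h1
      have hj : j ≠ 0 := by rintro rfl; simp at h0
      obtain ⟨j, rfl⟩ := Nat.exists_eq_add_one_of_ne_zero hj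
      rw [show m * (j + 1) - m = m * j by rw [Nat.mul_succ]; omega, coeff_mk, coeff_one]
      rcases Nat.eq_zero_or_pos j with rfl | hj
      · simp [Nat.div_self hm]
      · obtain ⟨j, rfl⟩ := Nat.exists_eq_add_one_of_ne_zero hj.ne'
        simp [show m ≠ 0 by omega, Nat.mul_div_cancel_left _ hm, pow_succ, mul_comm]
    · exact absurd (Nat.le_of_dvd (Nat.pos_of_ne_zero h1.1) h1.2) h2
    · have h3 : ¬ m ∣ N - m := fun h4 ↦ h1 ⟨by omega, by
        rw [← Nat.sub_add_cancel h2]; exact h4.add (dvd_refl m)⟩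
      have h4 : N - m ≠ 0 := fun h5 ↦ h3 (h5 ▸ dvd_zero m)
      simp [h3, h4, coeff_one]
    · rfl
  linear_combination h

/-- By `h`, deleting one copy of `m` gives
`occSeries A m = q^m · (countSeries A + c · occSeries A m)`. The hypothesis holds with `c = 1` when
`A` puts no constraint on the multiplicity of `m`, and with `c = -1` when `A` is distinctness: there
`m` can be added only to a partition that does not contain it yet. -/
lemma occSeries_eq {c : ℤ} {m : ℕ} (hm : 1 ≤ m)
    (h : ∀ t : Multiset ℕ, (if A (m ::ₘ t) then ((m ::ₘ t).count m : ℤ) else 0)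
      = if A t then 1 + c * (t.count m : ℤ) else 0) :
    occSeries A m = countSeries A * lambert c m := by
  have h1 : occSeries A m = X ^ m * (countSeries A + C c * occSeries A m) := by
    ext n
    rw [coeff_X_pow_mul', map_add, coeff_C_mul, occSeries, coeff_mk, countSeries, coeff_mk,
      coeff_mk, sum_partition_remove (fun t ↦ if A t then (t.count m : ℤ) else 0) hm]
    · rw [Finset.mul_sum, ← Finset.sum_add_distrib]
      congr 1
      refine Finset.sum_congr rfl fun p _ ↦ ?_
      rw [h]
      split_ifs <;> simp
    · intro t ht
      simp [Multiset.count_eq_zero_of_notMem ht]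
  have h2 : (1 - C c * X ^ m : ℤ⟦X⟧) ≠ 0 := by
    intro h0
    have := lambert_mul c hm
    rw [h0, mul_zero] at this
    exact pow_ne_zero m X_ne_zero this.symm
  apply mul_right_cancel₀ h2
  rw [mul_assoc, lambert_mul c hm]
  linear_combination h1

/-- Summing the occurrences over all sizes `m`; sizes above `j` do not affect the coefficient of
`q^j`, which keeps the sum over `m` finite. -/
lemma partsSeries_eq (G : ℤ⟦X⟧) (D : ℕ → ℤ⟦X⟧) (h : ∀ m, 1 ≤ m → occSeries A m = G * D m)
    (hD : ∀ m j, j < m → coeff j (D m) = 0) :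
    partsSeries A = G * PowerSeries.mk fun j ↦ ∑ m ∈ Finset.Icc 1 j, coeff j (D m) := by
  ext n
  have h1 : coeff n (partsSeries A) = ∑ m ∈ Finset.Icc 1 n, coeff n (occSeries A m) := by
    simp_rw [partsSeries, occSeries, coeff_mk]
    rw [Finset.sum_comm]
    refine Finset.sum_congr rfl fun p _ ↦ ?_
    split_ifs
    · rw [← Nat.cast_sum, Multiset.sum_count_eq_card]
      intro a ha
      exact Finset.mem_Icc.mpr ⟨p.parts_pos ha, Nat.Partition.le_of_mem_parts ha⟩
    · simp
  rw [h1, Finset.sum_congr rfl fun m hm ↦ by rw [h m (Finset.mem_Icc.mp hm).1, coeff_mul]]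
  rw [Finset.sum_comm, coeff_mul]
  refine Finset.sum_congr rfl fun x hx ↦ ?_
  rw [coeff_mk, ← Finset.mul_sum]
  congr 1
  have hx' := Finset.HasAntidiagonal.mem_antidiagonal.mp hx
  symm
  apply Finset.sum_subset (Finset.Icc_subset_Icc_right (by omega))
  intro m hm hm'
  apply hD
  simp only [Finset.mem_Icc] at hm hm'
  omega

end

lemma coeff_lambert_of_lt (c : ℤ) {m j : ℕ} (h : j < m) : coeff j (lambert c m) = 0 := by
  rw [lambert, coeff_mk, if_neg]
  rintro ⟨h0, h1⟩
  exact absurd (Nat.le_of_dvd (Nat.pos_of_ne_zero h0) h1) (by omega)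

lemma partsSeries_restricted (p : ℕ → Prop) [DecidablePred p] :
    partsSeries (fun t ↦ ∀ i ∈ t, p i) = restrictedSeries p *
      PowerSeries.mk fun j ↦ ∑ m ∈ Finset.Icc 1 j, coeff j (if p m then lambert 1 m else 0) := by
  have hG : restrictedSeries p = countSeries (fun t ↦ ∀ i ∈ t, p i) := by
    ext n
    simp [restrictedSeries, countSeries, Nat.Partition.restricted]
  rw [hG]
  apply partsSeries_eq
  · intro m hm
    split_ifs with h
    · apply occSeries_eq _ hm
      intro t
      simp [h, add_comm]
    · rw [mul_zero]
      ext n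
      rw [occSeries, coeff_mk, map_zero]
      refine Finset.sum_eq_zero fun q _ ↦ ?_
      split_ifs with hq
      · rw [Multiset.count_eq_zero_of_notMem fun hmem ↦ h (hq m hmem), Nat.cast_zero]
      · rfl
  · intro m j h
    split_ifs
    · exact coeff_lambert_of_lt 1 h
    · simp

/-- The partition series on the right is that of odd parts, by Euler's theorem. -/
lemma partsSeries_distinct :
    partsSeries Multiset.Nodup = restrictedSeries (¬ Even ·) *
      PowerSeries.mk fun j ↦ ∑ m ∈ Finset.Icc 1 j, coeff j (lambert (-1) m) := by
  have hG : restrictedSeries (¬ Even ·) = countSeries Multiset.Nodup := by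
    ext n
    have := Nat.Partition.card_odds_eq_card_distincts n
    rw [Nat.Partition.odds, Nat.Partition.distincts] at this
    rw [restrictedSeries, countSeries, coeff_mk, coeff_mk, this, Finset.sum_boole]
  rw [hG]
  apply partsSeries_eq
  · intro m hm
    apply occSeries_eq _ hm
    intro t
    by_cases ht : t.Nodup
    · by_cases hmt : m ∈ t
      · simp [ht, hmt]
      · simp [ht, hmt]
    · simp [ht]
  · intro m j h
    exact coeff_lambert_of_lt _ h

/-- Both sides compare odd and even divisors of `j`, through `m` on the left and through the
complementary divisor `j / m` on the right. -/
lemma sum_lambert (j : ℕ) :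
    ∑ m ∈ Finset.Icc 1 j, coeff j (if ¬ Even m then lambert 1 m else 0)
      - ∑ m ∈ Finset.Icc 1 j, coeff j (if Even m then lambert 1 m else 0)
    = ∑ m ∈ Finset.Icc 1 j, coeff j (lambert (-1) m) := by
  have key := Nat.sum_div_divisors j (fun m ↦ (-1 : ℤ) ^ (m - 1))
  have hd : Nat.divisors j = (Finset.Icc 1 j).filter (· ∣ j) := by
    ext m
    simp only [Nat.mem_divisors, Finset.mem_filter, Finset.mem_Icc]
    constructor
    · rintro ⟨h, h0⟩
      exact ⟨⟨Nat.pos_of_dvd_of_pos h (Nat.pos_of_ne_zero h0),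
        Nat.le_of_dvd (Nat.pos_of_ne_zero h0) h⟩, h⟩
    · rintro ⟨h, h0⟩
      exact ⟨h0, by omega⟩
  rw [hd, Finset.sum_filter, Finset.sum_filter] at key
  rw [← Finset.sum_sub_distrib]
  have e1 : ∀ m ∈ Finset.Icc 1 j, coeff j (lambert (-1) m)
      = if m ∣ j then (-1 : ℤ) ^ (j / m - 1) else 0 := by
    intro m hm
    have := Finset.mem_Icc.mp hm
    rw [lambert, coeff_mk]
    simp [show j ≠ 0 by omega]
  rw [Finset.sum_congr rfl e1, key]
  refine Finset.sum_congr rfl fun m hm ↦ ?_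
  have := Finset.mem_Icc.mp hm
  obtain ⟨m, rfl⟩ : ∃ k, m = k + 1 := ⟨m - 1, by omega⟩
  rcases Nat.even_or_odd m with he | ho
  · simp [lambert, he, parity_simps, show j ≠ 0 by omega]
  · have := Nat.not_even_iff_odd.mpr ho
    simp only [lambert, ho.neg_one_pow, Nat.even_add_one, this, Nat.add_sub_cancel]
    have hj : j ≠ 0 := by omega
    split_ifs <;> simp_all

/-- The excess of parts in odd over distinct partitions has the generating function
`∑ q^(k(k+1)/2)` times that of the number of parts in partitions into even parts. -/
lemma partsSeries_sub :
    partsSeries (fun t ↦ ∀ i ∈ t, ¬ Even i) - partsSeries Multiset.Nodup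
      = triangularSeries * partsSeries (fun t ↦ ∀ i ∈ t, Even i) := by
  rw [partsSeries_restricted (Even ·), ← mul_assoc, ← restrictedSeries_odd,
    partsSeries_restricted (¬ Even ·), partsSeries_distinct, ← mul_sub]
  congr 1
  ext j
  rw [map_sub, coeff_mk, coeff_mk, coeff_mk, ← sum_lambert]
  ring

/-! ### Extracting coefficients -/

/-- Doubling every part identifies the partitions of `m` with the partitions of `2 * m` into even
parts. -/
lemma coeff_partsSeries_even (m : ℕ) :
    coeff (2 * m) (partsSeries (fun t ↦ ∀ i ∈ t, Even i)) = SN m := by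
  rw [partsSeries, coeff_mk, ← Finset.sum_filter, SN, Nat.cast_sum]
  symm
  refine Finset.sum_bij' (i := fun p _ ↦ ⟨p.parts.map (2 * ·), ?_, ?_⟩)
    (j := fun p hp ↦ ⟨p.parts.map (· / 2), ?_, ?_⟩) ?_ ?_ ?_ ?_ ?_
  · intro i hi
    obtain ⟨a, ha, rfl⟩ := Multiset.mem_map.mp hi
    have := p.parts_pos ha
    omega
  · rw [Multiset.sum_map_mul_left, Multiset.map_id', p.parts_sum]
  · intro i hi
    obtain ⟨a, ha, rfl⟩ := Multiset.mem_map.mp hi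
    have := p.parts_pos ha
    obtain ⟨k, rfl⟩ := (Finset.mem_filter.mp hp).2 a ha
    omega
  · have h : p.parts.map (fun x ↦ 2 * (x / 2)) = p.parts := by
      conv_rhs => rw [← Multiset.map_id p.parts]
      exact Multiset.map_congr rfl fun x hx ↦
        Nat.two_mul_div_two_of_even ((Finset.mem_filter.mp hp).2 x hx)
    have h2 := Multiset.sum_map_mul_left (s := p.parts) (a := 2) (f := fun x ↦ x / 2)
    rw [h, p.parts_sum] at h2
    omega
  · intro p _
    simp
  · intro p _
    simp
  · intro p _
    ext1
    simp
  · intro p hp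
    ext1
    simp only [Multiset.map_map, Function.comp_def]
    conv_rhs => rw [← Multiset.map_id p.parts]
    exact Multiset.map_congr rfl fun x hx ↦
      Nat.two_mul_div_two_of_even ((Finset.mem_filter.mp hp).2 x hx)
  · intro p _
    simp

lemma coeff_partsSeries_even_of_odd {n : ℕ} (hn : ¬ Even n) :
    coeff n (partsSeries (fun t ↦ ∀ i ∈ t, Even i)) = 0 := by
  rw [partsSeries, coeff_mk]
  refine Finset.sum_eq_zero fun p _ ↦ if_neg fun h ↦ hn ?_
  rw [even_iff_two_dvd, ← p.parts_sum]
  exact Multiset.dvd_sum fun x hx ↦ (h x hx).two_dvd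

lemma S_natCast (m : ℕ) : S m = SN m := by
  rcases Nat.eq_zero_or_pos m with rfl | hm
  · simp [S, SN]
  · simp [S, hm]

/-- The summand in the theorem is a coefficient of the series counting parts in partitions into
even parts. -/
lemma summand_eq (n k : ℕ) :
    (if (4 : ℤ) ∣ (2 * (n : ℤ) - k * (k + 1)) then S ((2 * (n : ℤ) - k * (k + 1)) / 4) else 0)
      = if k * (k + 1) / 2 ≤ n then
          coeff (n - k * (k + 1) / 2) (partsSeries (fun t ↦ ∀ i ∈ t, Even i)) else 0 := by
  obtain ⟨t, ht⟩ := (Nat.even_mul_succ_self k).two_dvd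
  have ht' : (k : ℤ) * (k + 1) = 2 * t := by exact_mod_cast ht
  have hdiv : k * (k + 1) / 2 = t := by
    rw [show k * (k + 1) = 2 * t from ht]
    omega
  rw [hdiv, ht']
  by_cases h : t ≤ n
  · obtain ⟨d, rfl⟩ := Nat.exists_eq_add_of_le h
    rw [if_pos h, Nat.add_sub_cancel_left]
    rcases Nat.even_or_odd' d with ⟨m, rfl | rfl⟩
    · rw [coeff_partsSeries_even, ← S_natCast, if_pos (by push_cast; omega)]
      congr 1
      push_cast
      omega
    · rw [coeff_partsSeries_even_of_odd (by simp [parity_simps]), if_neg (by push_cast; omega)]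
  · rw [if_neg h]
    split_ifs
    · rw [S, if_neg (by omega)]
    · rfl

lemma b_eq_coeff (n : ℕ) :
    b n = coeff n (triangularSeries * partsSeries (fun t ↦ ∀ i ∈ t, Even i)) := by
  rw [← partsSeries_sub, map_sub, partsSeries, partsSeries, coeff_mk, coeff_mk, b,
    if_pos (Int.natCast_nonneg n), Int.toNat_natCast, oddPartsTotal, distinctPartsTotal,
    Nat.Partition.odds, Nat.Partition.restricted, Nat.Partition.distincts,
    ← Finset.sum_filter, ← Finset.sum_filter, Nat.cast_sum, Nat.cast_sum]

end PartsCount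


open PartsCount PowerSeries

/-- Corollary 4: `b(n) = ∑_{k=0}^{∞} S((2n - k(k+1))/4)`, where a summand contributes only
when `4 ∣ 2n - k(k+1)` and the quotient is a positive integer. -/
theorem statement10 (n : ℕ) (hn : 1 ≤ n) :
    b n = ∑ᶠ k : ℕ,
      if (4 : ℤ) ∣ (2 * (n : ℤ) - k * (k + 1)) then S ((2 * (n : ℤ) - k * (k + 1)) / 4)
      else 0 := by
  -- Only the terms with `k ≤ n` of the triangular series reach the coefficient of `q^n`.
  have hsum : coeff n (triangularSeries * partsSeries (fun t ↦ ∀ i ∈ t, Even i))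
      = coeff n ((∑ k ∈ range (n + 1), (X : ℤ⟦X⟧) ^ (k * (k + 1) / 2))
        * partsSeries (fun t ↦ ∀ i ∈ t, Even i)) := by
    rw [coeff_mul, coeff_mul]
    refine Finset.sum_congr rfl fun x hx ↦ ?_
    have := Finset.HasAntidiagonal.mem_antidiagonal.mp hx
    rw [coeff_triangularSeries (N := n + 1) (by omega)]
  rw [b_eq_coeff, hsum, Finset.sum_mul, map_sum]
  simp_rw [summand_eq, coeff_X_pow_mul']
  symm
  apply finsum_eq_sum_of_support_subset
  intro k hk
  rw [Function.mem_support] at hk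
  have h1 : k * (k + 1) / 2 ≤ n := by
    by_contra h
    exact hk (if_neg h)
  have h2 := le_triangular k
  simp only [Finset.coe_range, Set.mem_Iio]
  omega
end

section
/- For every positive integer n, b(2n) = Σ_{k=−∞}^{∞} S(n − k(4k−1)), where the sum over all integers k (positive and negative) is finite since S vanishes on non-positive arguments. -/
/-!
Write `q` for the variable, `P(q) = ∏ 1/(1 - q^m)` over all `m ≥ 1`, `L(q) = ∑ q^m/(1 - q^m)`, and
`ψ(q) = ∑_{s ≥ 0} q^{s(s+1)/2}`.

Weight a partition by `z ^ (number of parts)` with `z = 1 + e` and `e² = 0`; the coefficient of `e`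
then counts parts. To first order in `e` an infinite product `∏ aᵢ (1 + e cᵢ)` is
`(∏ aᵢ) (1 + e ∑ cᵢ)` (`hasProd_mul_one_add`), so every weighted generating function is the
unweighted one times `1 + e` times a Lambert series. For all partitions this gives
`P(q) (1 + e L(q))`. Partitions into odd parts and into distinct parts share the unweighted
generating function `O(q)`, by Euler, and their Lambert series differ by `L(q²)`; hence
`∑ b(n) qⁿ = O(q) L(q²)`.

Gauss's identity `O(q) = ψ(q) P(q²)` (`gauss`) turns this into `ψ(q) · P(q²) L(q²)`, where
`P(q) L(q) = ∑ SN(n) qⁿ` (`genOdd_sub_genDistinct`). It follows from a finite identity of Shanks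
(`shanks`), an induction with a telescoping sum, by letting the number of factors tend to infinity.

Comparing coefficients at `2n`, only even triangular numbers contribute, and these are exactly the
numbers `2k(4k - 1)` with `k ∈ ℤ`, each taken once.
-/

open Nat Finset

/-! ### Geometric series -/

section Series

open PowerSeries Filter Topology
open scoped PowerSeries.WithPiTopology

variable {R : Type*} [CommRing R]

/-- The geometric series `1 / (1 - X ^ m)`, meaningful for `m ≠ 0`. -/
noncomputable def geom (R : Type*) [CommRing R] (m : ℕ) : PowerSeries R :=
  PowerSeries.invOfUnit (1 - X ^ m) 1

theorem one_sub_mul_geom {m : ℕ} (hm : m ≠ 0) : (1 - X ^ m) * geom R m = 1 :=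
  PowerSeries.mul_invOfUnit _ _ (by simp [hm])

theorem eq_geom_mul {m : ℕ} (hm : m ≠ 0) {f g : PowerSeries R} (h : (1 - X ^ m) * f = g) :
    f = geom R m * g := by
  rw [← h, ← mul_assoc, mul_comm (geom R m), one_sub_mul_geom hm, one_mul]

theorem X_pow_mul_geom {m : ℕ} (hm : m ≠ 0) : X ^ m * geom R m = geom R m - 1 := by
  linear_combination - one_sub_mul_geom (R := R) hm

theorem expand_geom {m : ℕ} (hm : m ≠ 0) :
    expand 2 two_ne_zero (geom R m) = geom R (2 * m) := by
  have h := congrArg (expand 2 two_ne_zero) (one_sub_mul_geom (R := R) hm)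
  rw [map_mul, map_sub, map_pow, map_one, expand_X, ← pow_mul] at h
  rw [eq_geom_mul (by omega) h, mul_one]

/-! ### Shanks's finite form of Gauss's identity -/

/-- The triangular number `s (s + 1) / 2`, as a sum so as to avoid natural-number division. -/
def tri (s : ℕ) : ℕ := ∑ i ∈ range (s + 1), i

theorem tri_succ (s : ℕ) : tri (s + 1) = tri s + (s + 1) := Finset.sum_range_succ _ _

theorem two_mul_tri (s : ℕ) : 2 * tri s = s * (s + 1) := by
  induction s with
  | zero => rfl
  | succ k ih => rw [tri_succ]; linarith

theorem le_tri (s : ℕ) : s ≤ tri s := by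
  cases s with
  | zero => simp
  | succ k => rw [tri_succ]; omega

/-- Shanks's identity
`∑_{s ≤ 2n} q^{s(s+1)/2} = ∑_{s ≤ n} (Pₙ / Pₛ) q^{s(2n+1)}`, where
`Pₙ = ∏_{k < n} (1 - q^{2k+2}) / (1 - q^{2k+1})`, multiplied by the denominator of `Pₙ` so that it
makes sense in any commutative ring. On the right, only the term `s = 0` is not divisible by
`q ^ (2n + 1)`. -/
theorem shanks (q : R) (n : ℕ) :
    (∏ k ∈ range n, (1 - q ^ (2 * k + 1))) * ∑ s ∈ range (2 * n + 1), q ^ tri s =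
      ∑ s ∈ range (n + 1), (∏ k ∈ range s, (1 - q ^ (2 * k + 1))) *
        (∏ k ∈ Ico s n, (1 - q ^ (2 * k + 2))) * q ^ (s * (2 * n + 1)) := by
  induction n with
  | zero => simp [tri]
  | succ n ih =>
    set D : ℕ → R := fun s => ∏ k ∈ range s, (1 - q ^ (2 * k + 1)) with hD
    have hD' (s) : D (s + 1) = D s * (1 - q ^ (2 * s + 1)) := prod_range_succ _ _
    set E : ℕ → R := fun s => ∏ k ∈ Ico s n, (1 - q ^ (2 * k + 2)) with hE
    have t1 : tri (2 * n + 1) = (n + 1) * (2 * n + 1) := by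
      have := two_mul_tri (2 * n + 1); nlinarith
    have t2 : tri (2 * n + 2) = (n + 1) * (2 * (n + 1) + 1) := by
      have := two_mul_tri (2 * n + 2); nlinarith
    -- Each term on the right for `n + 1` is `1 - q ^ (2n + 1)` times the corresponding term for `n`,
    -- plus `V (s + 1) - V s` when `s < n`; for `s = n` a boundary term takes the place of `V (s + 1)`.
    let V : ℕ → R := fun s => q ^ (s * (2 * n + 1)) * (1 - q ^ (2 * s)) * D s *
      ∏ k ∈ Ico s n, (1 - q ^ (2 * k + 2))
    have hV : ∀ s ∈ range (n + 1), (∏ k ∈ range s, (1 - q ^ (2 * k + 1))) *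
          (∏ k ∈ Ico s (n + 1), (1 - q ^ (2 * k + 2))) * q ^ (s * (2 * (n + 1) + 1)) =
        (1 - q ^ (2 * n + 1)) * (D s * E s * q ^ (s * (2 * n + 1))) +
          (q ^ ((s + 1) * (2 * n + 1)) * (1 - q ^ (2 * s + 1)) * D s * E s - V s) := by
      intro s hs
      have hs : s ≤ n := by simpa [Nat.lt_succ_iff] using hs
      rw [prod_Ico_succ_top hs]
      change D s * (E s * _) * _ = _ * _ + (_ - q ^ (s * (2 * n + 1)) * (1 - q ^ (2 * s)) * D s * E s)
      ring
    have htel : ∑ s ∈ range (n + 1),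
        (q ^ ((s + 1) * (2 * n + 1)) * (1 - q ^ (2 * s + 1)) * D s * E s - V s) =
        q ^ ((n + 1) * (2 * n + 1)) * D (n + 1) := by
      have h1 : ∀ s ∈ range n, q ^ ((s + 1) * (2 * n + 1)) * (1 - q ^ (2 * s + 1)) * D s * E s
          = V (s + 1) := by
        intro s hs
        have hs : s < n := by simpa using hs
        simp only [V, hE]
        rw [hD', prod_eq_prod_Ico_succ_bot hs]
        ring
      rw [sum_sub_distrib, sum_range_succ, sum_congr rfl h1, sum_range_succ' V, hD']
      simp [V, hE]
      ring
    rw [sum_range_succ _ (n + 1), sum_congr rfl hV, sum_add_distrib, ← mul_sum, ← ih, htel]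
    rw [show 2 * (n + 1) + 1 = 2 * n + 1 + 1 + 1 by ring, sum_range_succ, sum_range_succ,
      t1, show 2 * n + 1 + 1 = 2 * n + 2 by ring, t2]
    change D (n + 1) * _ = _ + D (n + 1) * _ * _
    have : (1 - q ^ (2 * n + 1)) * (D n * ∑ s ∈ range (2 * n + 1), q ^ tri s)
      = D (n + 1) * ∑ s ∈ range (2 * n + 1), q ^ tri s := by rw [hD']; ring
    rw [this]
    simp
    ring

/-! ### Infinite sums and products of power series -/

variable [TopologicalSpace R]

theorem summable_X_pow_mul {a : ℕ → ℕ} (ha : ∀ i, i ≤ a i) (f : ℕ → PowerSeries R) :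
    Summable fun i => X ^ a i * f i := by
  refine WithPiTopology.summable_of_tendsto_order_atTop_nhds_top _ ?_
  refine ENat.tendsto_nhds_top_iff_natCast_lt.mpr fun n =>
    Filter.eventually_atTop.mpr ⟨n + 1, fun m hm => ?_⟩
  refine lt_of_lt_of_le (b := ((n + 1 : ℕ) : ℕ∞)) (by norm_cast; omega) ?_
  refine PowerSeries.nat_le_order _ _ fun i hi => ?_
  rw [coeff_X_pow_mul', if_neg]
  have := ha m
  omega

theorem continuous_expand (p : ℕ) (hp : p ≠ 0) :
    Continuous (expand p hp : PowerSeries R → PowerSeries R) := by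
  rw [continuous_iff_continuousAt]
  intro f
  rw [ContinuousAt, WithPiTopology.tendsto_iff_coeff_tendsto]
  intro d
  simp_rw [coeff_expand]
  split_ifs
  · exact (WithPiTopology.continuous_coeff R _).tendsto f
  · exact tendsto_const_nhds

variable [IsTopologicalRing R]

/-- First-order expansion of an infinite product: since `E * E = 0`, the finite products of the
`1 + E * c i` are `1 + E * ∑ c i`. -/
theorem hasProd_mul_one_add {a c : ℕ → PowerSeries R} {P S E : PowerSeries R}
    (ha : HasProd a P) (hc : HasSum c S) (hE : E * E = 0) :
    HasProd (fun i => a i * (1 + E * c i)) (P * (1 + E * S)) := by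
  refine ha.mul ?_
  have h (s : Finset ℕ) : ∏ i ∈ s, (1 + E * c i) = 1 + E * ∑ i ∈ s, c i := by
    induction s using Finset.cons_induction with
    | empty => simp
    | cons i s hi ih =>
      rw [prod_cons, sum_cons, ih]
      linear_combination c i * (∑ i ∈ s, c i) * hE
  simp_rw [HasProd, h]
  exact tendsto_const_nhds.add (tendsto_const_nhds.mul hc)

variable [T2Space R]

/-- Gauss's identity: `∏ 1/(1 - q^{2k+1}) = (∑ q^{s(s+1)/2}) ∏ 1/(1 - q^{2k+2})`. -/
theorem gauss {O P ψ : PowerSeries R} (hO : HasProd (fun k => geom R (2 * k + 1)) O)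
    (hP : HasProd (fun k => geom R (2 * k + 2)) P) (hψ : HasSum (fun s => X ^ tri s) ψ) :
    O = ψ * P := by
  -- Shanks's identity divided by all its factors: the terms with `s ≥ 1` are divisible by `X ^ n`,
  -- hence vanish in the limit.
  have hfin (n : ℕ) : ∃ Z, (∑ s ∈ range (2 * n + 1), (X : PowerSeries R) ^ tri s) *
      (∏ k ∈ range n, geom R (2 * k + 2)) =
      (∏ k ∈ range n, geom R (2 * k + 1)) + X ^ n * Z := by
    have hs := shanks (X : PowerSeries R) n
    have h1 : (∏ k ∈ range n, (1 - X ^ (2 * k + 1))) * (∏ k ∈ range n, geom R (2 * k + 1)) = 1 := by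
      rw [← prod_mul_distrib]
      exact prod_eq_one fun k _ => one_sub_mul_geom (by omega)
    have h2 : (∏ k ∈ range n, (1 - X ^ (2 * k + 2))) * (∏ k ∈ range n, geom R (2 * k + 2)) = 1 := by
      rw [← prod_mul_distrib]
      exact prod_eq_one fun k _ => one_sub_mul_geom (by omega)
    obtain ⟨Y, hY⟩ : X ^ n ∣ ∑ s ∈ range n,
        (∏ k ∈ range (s + 1), (1 - (X : PowerSeries R) ^ (2 * k + 1))) *
        (∏ k ∈ Ico (s + 1) n, (1 - X ^ (2 * k + 2))) * X ^ ((s + 1) * (2 * n + 1)) :=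
      dvd_sum fun s _ => (pow_dvd_pow _ (by nlinarith)).mul_left _
    rw [sum_range_succ' _ n, hY] at hs
    simp only [range_zero, prod_empty, one_mul, zero_mul, pow_zero, mul_one,
      Nat.Ico_zero_eq_range] at hs
    generalize ∏ k ∈ range n, geom R (2 * k + 1) = A at *
    generalize ∏ k ∈ range n, geom R (2 * k + 2) = B at *
    refine ⟨A * B * Y, ?_⟩
    linear_combination A * B * hs + A * h2 -
      ((∑ s ∈ range (2 * n + 1), (X : PowerSeries R) ^ tri s) * B) * h1
  choose Z hZ using hfin
  have hlim : Tendsto (fun n => (∏ k ∈ range n, geom R (2 * k + 1)) + X ^ n * Z n) atTop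
      (𝓝 (O + 0)) :=
    hO.tendsto_prod_nat.add
      (summable_X_pow_mul (a := id) (fun _ => le_rfl) Z).tendsto_atTop_zero
  have hodd : Tendsto (fun n : ℕ => 2 * n + 1) atTop atTop :=
    tendsto_atTop_mono (fun n => show n ≤ 2 * n + 1 by omega) tendsto_id
  have hlim' : Tendsto (fun n => (∑ s ∈ range (2 * n + 1), (X : PowerSeries R) ^ tri s) *
      (∏ k ∈ range n, geom R (2 * k + 2))) atTop (𝓝 (ψ * P)) :=
    (hψ.tendsto_sum_nat.comp hodd).mul hP.tendsto_prod_nat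
  simp_rw [hZ] at hlim'
  rw [add_zero] at hlim
  exact tendsto_nhds_unique hlim hlim'

/-! ### Generating functions weighted by the number of parts -/

omit [TopologicalSpace R] [IsTopologicalRing R] [T2Space R] in
/-- The character `z ^ c` cut off by a condition `Q` on each part and its multiplicity weights a
partition satisfying `Q` throughout by `z ^ (number of parts)`, and any other by `0`. -/
theorem toFinsupp_prod_pow {n : ℕ} (p : n.Partition) (z : R) (Q : ℕ → ℕ → Prop)
    [∀ i c, Decidable (Q i c)] :
    p.parts.toFinsupp.prod (fun i c => if Q i c then z ^ c else 0) =
      if ∀ i ∈ p.parts, Q i (p.parts.count i) then z ^ Multiset.card p.parts else 0 := by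
  simp only [Finsupp.prod, Multiset.toFinsupp_support, Multiset.toFinsupp_apply]
  split_ifs with h
  · rw [← Multiset.toFinset_sum_count_eq, ← prod_pow_eq_pow_sum]
    exact prod_congr rfl fun i hi => if_pos (h i (by simpa using hi))
  · push Not at h
    obtain ⟨i, hi, hQ⟩ := h
    exact prod_eq_zero (i := i) (by simpa using hi) (if_neg hQ)

/-- Generating function of all partitions, each weighted by `z ^ (number of parts)`. -/
noncomputable def genAll (z : R) : PowerSeries R :=
  Nat.Partition.genFun fun _ c => z ^ c

/-- Generating function of the partitions into odd parts, each weighted by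
`z ^ (number of parts)`. -/
noncomputable def genOdd (z : R) : PowerSeries R :=
  Nat.Partition.genFun fun i c => if ¬ Even i then z ^ c else 0

/-- Generating function of the partitions into distinct parts, each weighted by
`z ^ (number of parts)`. -/
noncomputable def genDistinct (z : R) : PowerSeries R :=
  Nat.Partition.genFun fun _ c => if c < 2 then z ^ c else 0

omit [TopologicalSpace R] [IsTopologicalRing R] [T2Space R] in
theorem coeff_genAll (z : R) (n : ℕ) :
    coeff n (genAll z) = ∑ p : n.Partition, z ^ Multiset.card p.parts := by
  have := fun p : n.Partition => toFinsupp_prod_pow p z (fun _ _ => True)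
  simp only [if_true, implies_true] at this
  simp [genAll, this]

omit [TopologicalSpace R] [IsTopologicalRing R] [T2Space R] in
theorem coeff_genOdd (z : R) (n : ℕ) :
    coeff n (genOdd z) = ∑ p ∈ Nat.Partition.odds n, z ^ Multiset.card p.parts := by
  rw [genOdd, Nat.Partition.coeff_genFun, Nat.Partition.odds, Nat.Partition.restricted, sum_filter]
  exact sum_congr rfl fun p _ => toFinsupp_prod_pow p z (fun i _ => ¬ Even i)

omit [TopologicalSpace R] [IsTopologicalRing R] [T2Space R] in
theorem coeff_genDistinct (z : R) (n : ℕ) :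
    coeff n (genDistinct z) = ∑ p ∈ Nat.Partition.distincts n, z ^ Multiset.card p.parts := by
  rw [genDistinct, Nat.Partition.coeff_genFun, ← Nat.Partition.countRestricted_two,
    Nat.Partition.countRestricted, sum_filter]
  exact sum_congr rfl fun p _ => toFinsupp_prod_pow p z (fun _ c => c < 2)

omit [TopologicalSpace R] [IsTopologicalRing R] [T2Space R] in
/-- Euler's theorem: partitions into distinct parts and into odd parts are equinumerous. -/
theorem genDistinct_one : genDistinct (1 : R) = genOdd 1 := by
  ext n
  simp [coeff_genDistinct, coeff_genOdd, Nat.Partition.card_odds_eq_card_distincts]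

/-- The factor `1 / (1 - (1 + e) q^m)` belonging to the part `m`, expanded to first order in `e`:
it is `(1 + e q^m / (1 - q^m)) / (1 - q^m)`. -/
theorem geom_factor {e : R} (he : e * e = 0) {m : ℕ} (hm : m ≠ 0) :
    1 + ∑' j : ℕ, (1 + e) ^ (j + 1) • (X : PowerSeries R) ^ (m * (j + 1)) =
      geom R m * (1 + C e * (geom R m - 1)) := by
  have h0 : constantCoeff (C (1 + e) * X ^ m : PowerSeries R) = 0 := by simp [hm]
  have hs := WithPiTopology.summable_pow_of_constantCoeff_eq_zero h0
  have h1 := WithPiTopology.one_sub_mul_tsum_pow_of_constantCoeff_eq_zero h0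
  have h2 : ∑' j : ℕ, (C (1 + e) * X ^ m : PowerSeries R) ^ j =
      1 + ∑' j : ℕ, (1 + e) ^ (j + 1) • (X : PowerSeries R) ^ (m * (j + 1)) := by
    rw [hs.tsum_eq_zero_add, pow_zero]
    congr 1
    refine tsum_congr fun j => ?_
    rw [smul_eq_C_mul, mul_pow, ← pow_mul, map_pow]
  rw [← h2]
  have hE : C e * C e = (0 : PowerSeries R) := by rw [← map_mul, he, map_zero]
  have hG := one_sub_mul_geom (R := R) hm
  have hW : (1 - C (1 + e) * X ^ m) * (geom R m * (1 + C e * (geom R m - 1))) = 1 := by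
    rw [map_add, map_one]
    linear_combination (1 + C e * geom R m) * hG - X ^ m * geom R m * (geom R m - 1) * hE
  linear_combination (geom R m * (1 + C e * (geom R m - 1))) * h1 -
    (∑' j : ℕ, (C (1 + e) * X ^ m : PowerSeries R) ^ j) * hW

theorem hasProd_genAll {e : R} (he : e * e = 0) :
    HasProd (fun i => geom R (i + 1) * (1 + C e * (geom R (i + 1) - 1))) (genAll (1 + e)) := by
  have h := Nat.Partition.hasProd_genFun (R := R) (fun _ c => (1 + e) ^ c)
  exact h.congr_fun fun i => (geom_factor he (Nat.succ_ne_zero i)).symm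

theorem hasProd_genOdd {e : R} (he : e * e = 0) :
    HasProd (fun k => geom R (2 * k + 1) * (1 + C e * (geom R (2 * k + 1) - 1)))
      (genOdd (1 + e)) := by
  have h := Nat.Partition.hasProd_genFun (R := R)
    (fun i c => if ¬ Even i then (1 + e) ^ c else 0)
  have hinj : Function.Injective fun k : ℕ => 2 * k := fun a b h => by simpa using h
  rw [← hinj.hasProd_iff] at h
  · refine h.congr_fun fun k => ?_
    have hk : ¬ Even (2 * k + 1) := by simp
    simp only [Function.comp_apply, hk, not_false_eq_true, if_true]
    exact (geom_factor he (Nat.succ_ne_zero _)).symm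
  · intro i hi
    have : Even (i + 1) := by
      by_contra hodd
      obtain ⟨k, hk⟩ := Nat.not_even_iff_odd.mp hodd
      exact hi ⟨k, by simp only; omega⟩
    simp [this]

omit [IsTopologicalRing R] in
/-- The factor `1 + (1 + e) q^m` is `(1 + q^m) (1 + e q^m / (1 + q^m))`, and
`q^m / (1 + q^m) = q^m / (1 - q^m) - 2 q^{2m} / (1 - q^{2m})`. -/
theorem hasProd_genDistinct {e : R} :
    HasProd (fun i => (1 + X ^ (i + 1)) *
        (1 + C e * ((geom R (i + 1) - 1) - 2 * (geom R (2 * (i + 1)) - 1))))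
      (genDistinct (1 + e)) := by
  have h := Nat.Partition.hasProd_genFun (R := R) (fun _ c => if c < 2 then (1 + e) ^ c else 0)
  refine h.congr_fun fun i => ?_
  rw [tsum_eq_single 0 (by intro j hj; simp [hj])]
  have hG := one_sub_mul_geom (R := R) (m := i + 1) (Nat.succ_ne_zero i)
  have hG2 : (1 + X ^ (i + 1)) * geom R (2 * (i + 1)) = geom R (i + 1) := by
    have h2 := one_sub_mul_geom (R := R) (m := 2 * (i + 1)) (by omega)
    have := eq_geom_mul (R := R) (m := i + 1) (by omega)
      (f := (1 + X ^ (i + 1)) * geom R (2 * (i + 1))) (g := 1) (by linear_combination h2)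
    rw [this, mul_one]
  simp only [zero_add, one_lt_two, if_true, pow_one, mul_one, smul_eq_C_mul, map_add, map_one]
  linear_combination -2 * C e * hG2 - C e * hG

/-- The `e`-part of this identity is `∑ b(n) qⁿ = ψ(q) ∑ SN(n) q^{2n}`. -/
theorem genOdd_sub_genDistinct {e : R} (he : e * e = 0) {ψ : PowerSeries R}
    (hψ : HasSum (fun s => X ^ tri s) ψ) :
    genOdd (1 + e) - genDistinct (1 + e) =
      ψ * (expand 2 two_ne_zero (genAll (1 + e)) - expand 2 two_ne_zero (genAll 1)) := by
  have hE : C e * C e = (0 : PowerSeries R) := by rw [← map_mul, he, map_zero]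
  have hP : HasProd (fun i => geom R (i + 1)) (genAll 1) := by
    simpa using hasProd_genAll (R := R) (e := 0) (by simp)
  have hO : HasProd (fun k => geom R (2 * k + 1)) (genOdd 1) := by
    simpa using hasProd_genOdd (R := R) (e := 0) (by simp)
  have hD : HasProd (fun i => 1 + X ^ (i + 1)) (genOdd (1 : R)) := by
    simpa [genDistinct_one] using hasProd_genDistinct (R := R) (e := 0)
  -- `L` and `Lo` are the Lambert series `∑ q^m / (1 - q^m)` over all `m` and over odd `m`. The terms
  -- of even index `m = 2i` make up `L(q²)`, whence `L(q) = Lo(q) + L(q²)`.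
  have hsum {a : ℕ → ℕ} (ha : ∀ i, i + 1 ≤ a i) : Summable fun i => geom R (a i) - 1 :=
    (summable_X_pow_mul (fun i => (Nat.le_succ i).trans (ha i)) fun i => geom R (a i)).congr
      fun i => X_pow_mul_geom (by have := ha i; omega)
  obtain ⟨L, hL⟩ := hsum (a := fun i => i + 1) fun i => le_rfl
  obtain ⟨Lo, hLo⟩ := hsum (a := fun i => 2 * i + 1) fun i => by omega
  have hmap := continuous_expand (R := R) 2 two_ne_zero
  have hP2 := hP.map (expand 2 two_ne_zero) hmap
  have hL2 := hL.map (expand 2 two_ne_zero) hmap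
  have hexp (i : ℕ) : expand 2 two_ne_zero (geom R (i + 1)) = geom R (2 * (i + 1)) :=
    expand_geom (Nat.succ_ne_zero i)
  simp only [Function.comp_def, map_sub, map_one, hexp] at hP2 hL2
  have hLL : L = Lo + expand 2 two_ne_zero L :=
    hL.unique (HasSum.even_add_odd (f := fun i => geom R (i + 1) - 1) hLo hL2)
  have hT := (hasProd_genAll he).unique (hasProd_mul_one_add hP hL hE)
  have hO' := (hasProd_genOdd he).unique (hasProd_mul_one_add hO hLo hE)
  have hD' := (hasProd_genDistinct (e := e)).unique
    (hasProd_mul_one_add hD (hL.sub (hL2.mul_left 2)) hE)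
  have hG := gauss hO hP2 hψ
  have hC : expand 2 two_ne_zero (C e : PowerSeries R) = C e := expand_C _ _ _
  rw [hT, hO', hD', map_mul, map_add, map_one, map_mul, hC]
  linear_combination C e * expand 2 two_ne_zero L * hG - C e * genOdd 1 * hLL

end Series

/-! ### Comparing coefficients -/

open PowerSeries TrivSqZeroExt in
open scoped PowerSeries.WithPiTopology in
/-- Coefficientwise form of `∑ b(n) qⁿ = ψ(q) ∑ SN(n) q^{2n}`, read off from
`genOdd_sub_genDistinct` over the dual numbers as the coefficient of `ε`. -/
theorem hasSum_SN_sub_tri (n : ℕ) :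
    HasSum (fun s => if tri s ≤ n ∧ 2 ∣ n - tri s then (SN ((n - tri s) / 2) : ℤ) else 0)
      ((oddPartsTotal n : ℤ) - distinctPartsTotal n) := by
  -- The coefficient of `ε` in `(1 + ε) ^ c` is `c`, so it counts parts.
  have hsnd (c : ℕ) : snd ((1 + DualNumber.eps : DualNumber ℤ) ^ c) = c := by
    simp [TrivSqZeroExt.snd_pow]
  obtain ⟨ψ, hψ⟩ : Summable fun s => (X : PowerSeries (DualNumber ℤ)) ^ tri s := by
    simpa using summable_X_pow_mul (R := DualNumber ℤ) le_tri fun _ => 1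
  have h := genOdd_sub_genDistinct (DualNumber.eps_mul_eps (R := ℤ)) hψ
  set Y := expand 2 two_ne_zero (genAll (1 + DualNumber.eps : DualNumber ℤ)) -
    expand 2 two_ne_zero (genAll 1) with hY
  have hcoeff := (((hψ.mul_right Y).map (coeff n)
    (WithPiTopology.continuous_coeff (DualNumber ℤ) n))).map (sndHom ℤ ℤ)
    TrivSqZeroExt.continuous_snd
  rw [← h] at hcoeff
  convert hcoeff using 1
  · funext s
    have hYc (m : ℕ) : snd (coeff m Y) = if 2 ∣ m then (SN (m / 2) : ℤ) else 0 := by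
      rw [hY, map_sub, coeff_expand, coeff_expand]
      split_ifs
      · simp [coeff_genAll, hsnd, SN, TrivSqZeroExt.snd_sum]
      · simp
    simp only [Function.comp_apply, coeff_X_pow_mul', sndHom_apply]
    split_ifs <;> simp_all
  · simp [coeff_genOdd, coeff_genDistinct, hsnd, oddPartsTotal, distinctPartsTotal,
      TrivSqZeroExt.snd_sum]

/-- `b(2n) = ∑_{k=-∞}^{∞} S(n - k(4k-1))`. -/
theorem statement11 (n : ℕ) (hn : 0 < n) :
    b (2 * (n : ℤ)) = ∑ᶠ k : ℤ, S ((n : ℤ) - k * (4 * k - 1)) := by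
  have h := hasSum_SN_sub_tri (2 * n)
  have hb : b (2 * (n : ℤ)) = (oddPartsTotal (2 * n) : ℤ) - distinctPartsTotal (2 * n) := by
    rw [b, if_pos (by positivity)]; rfl
  rw [← hb] at h
  -- The even triangular numbers are `tri (4k - 1)` for `k > 0` and `tri (-4k)` for `k ≤ 0`, equal to
  -- `2k(4k - 1)` in both cases.
  let idx : ℤ → ℕ := fun k => if 0 < k then (4 * k - 1).toNat else (-4 * k).toNat
  have h_idx (k : ℤ) : (tri (idx k) : ℤ) = 2 * (k * (4 * k - 1)) := by
    have h2 : 2 * (tri (idx k) : ℤ) = idx k * (idx k + 1) := by exact_mod_cast two_mul_tri (idx k)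
    by_cases hk : 0 < k
    · have : (idx k : ℤ) = 4 * k - 1 := by simp only [idx, if_pos hk]; omega
      rw [this] at h2; linarith
    · have : (idx k : ℤ) = -4 * k := by simp only [idx, if_neg hk]; omega
      rw [this] at h2; linarith
  have hinj : Function.Injective idx := fun a b hab => by
    simp only [idx] at hab; split_ifs at hab <;> omega
  rw [← hinj.hasSum_iff] at h
  · have hterm (k : ℤ) : (if tri (idx k) ≤ 2 * n ∧ 2 ∣ 2 * n - tri (idx k) then
        (SN ((2 * n - tri (idx k)) / 2) : ℤ) else 0) = S ((n : ℤ) - k * (4 * k - 1)) := by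
      have h1 := h_idx k
      have hSN : SN 0 = 0 := by simp [SN]
      generalize k * (4 * k - 1) = t at *
      rw [S]
      -- At `t = n` the left side is `SN 0 = 0`, in agreement with `S 0 = 0`.
      by_cases hlt : 0 < (n : ℤ) - t
      · rw [if_pos hlt, if_pos (by omega)]
        congr 2; omega
      · rw [if_neg hlt]
        split_ifs
        · rw [show (2 * n - tri (idx k)) / 2 = 0 by omega, hSN]; rfl
        · rfl
    have h' : HasSum (fun k : ℤ => S ((n : ℤ) - k * (4 * k - 1))) (b (2 * (n : ℤ))) :=
      h.congr_fun fun k => (hterm k).symm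
    rw [← h'.tsum_eq]
    refine tsum_eq_finsum ((Set.finite_Icc (-(n : ℤ)) n).subset fun k hk => ?_)
    have hpos : 0 < (n : ℤ) - k * (4 * k - 1) := by
      by_contra hneg
      exact hk (if_neg hneg)
    constructor <;> nlinarith
  · intro s hs
    refine if_neg fun ⟨hle, hdvd⟩ => hs ?_
    have heven : 2 ∣ tri s := by omega
    obtain ⟨t, ht⟩ := heven
    have h2 := two_mul_tri s
    rw [ht] at h2
    have hmod : s % 4 = 0 ∨ s % 4 = 3 := by
      have h4 : s * (s + 1) % 4 = 0 := by omega
      have : s % 4 < 4 := Nat.mod_lt _ (by norm_num)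
      rw [Nat.mul_mod, Nat.add_mod] at h4
      interval_cases s % 4 <;> simp_all
    rcases hmod with h0 | h3
    · exact ⟨-(s / 4 : ℕ), by simp only [idx]; split_ifs <;> omega⟩
    · exact ⟨((s + 1) / 4 : ℕ), by simp only [idx]; split_ifs <;> omega⟩
end
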